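/- arXiv:1508.03349 — 2 statements merged into one kernel-verified Lean document; each statement's English description precedes it below -/
import Mathlib

section
/- Conditional Chebyshev covering bound: In the covering setup, if (u₀,u_{k+1}) satisfies P(F(u₀,u_{k+1})) ≥ 1 − ε, then P(Z = 0 | u₀, u_{k+1}) ≤ (1/(1−ε)) |M|^{−1} e^{γ} + (1/(1−ε)²) ∑_{∅⊊S⊊[k]} |M_S|^{−1} e^{−α_S − 2β_{S^c} + 2γ}. -/
open Finset Real

/-- Marginal of the joint pmf `p` onto `(u₀, (u_j)_{j∈S}, u_{k+1})`,
evaluated at a full tuple `z`. -/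
def cvMargS {k : ℕ} {Ω₀ B : Type*} {A : Fin k → Type*}
    [Fintype Ω₀] [Fintype B] [∀ j, Fintype (A j)]
    [DecidableEq Ω₀] [DecidableEq B] [∀ j, DecidableEq (A j)]
    (p : Ω₀ × (∀ j, A j) × B → ℝ) (S : Finset (Fin k))
    (z : Ω₀ × (∀ j, A j) × B) : ℝ :=
  ∑ w ∈ Finset.univ.filter (fun w : Ω₀ × (∀ j, A j) × B =>
    w.1 = z.1 ∧ (∀ j ∈ S, w.2.1 j = z.2.1 j) ∧ w.2.2 = z.2.2), p w

/-- Projection `F_S` of `F` onto the `(u₀, u_S, u_{k+1})` coordinates. -/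
def cvProjS {k : ℕ} {Ω₀ B : Type*} {A : Fin k → Type*}
    (F : Set (Ω₀ × (∀ j, A j) × B)) (S : Finset (Fin k)) :
    Set (Ω₀ × (∀ j, A j) × B) :=
  {z | ∃ y : ∀ j, A j, (∀ j ∈ S, y j = z.2.1 j) ∧ (z.1, y, z.2.2) ∈ F}

/-- Bound on the pair sum for an agreement set `S`. -/
theorem cv_T_bound {k : ℕ} {A : Fin k → Type*} [∀ j, Fintype (A j)] [∀ j, DecidableEq (A j)]
    (r : (∀ j, A j) → ℝ) (hr : ∀ x, 0 ≤ r x) (q : ∀ j, A j → ℝ) (hq : ∀ j a, 0 ≤ q j a)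
    (G : Finset (∀ j, A j)) (hD : 0 < ∑ x, r x) (S : Finset (Fin k)) (a e : ℝ)
    (N : (∀ j, A j) → ℝ)
    (hN : ∀ x, N x = ∑ y, if ∀ j ∈ S, y j = x j then r y else 0)
    (ha : ∀ x ∈ G, Real.exp a * ((∑ x, r x) * ∏ j ∈ S, q j (x j)) ≤ N x)
    (hb : ∀ x ∈ G, Real.exp e * (N x * ∏ j ∈ Sᶜ, q j (x j)) ≤ r x) :
    ∑ x ∈ G, ∑ x' ∈ G, (if ∀ j ∈ S, x' j = x j then
      (∏ j, q j (x j)) * ∏ j ∈ Sᶜ, q j (x' j) else 0) ≤ Real.exp (-a - 2 * e) := by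
  set D := ∑ x, r x with hDdef
  have key : ∀ x ∈ G, ∑ x' ∈ G, (if ∀ j ∈ S, x' j = x j then
      (∏ j, q j (x j)) * ∏ j ∈ Sᶜ, q j (x' j) else 0) ≤ Real.exp (-a - 2 * e) * (r x / D) := by
    intro x hx
    have hsplit : ∏ j, q j (x j) = (∏ j ∈ S, q j (x j)) * ∏ j ∈ Sᶜ, q j (x j) :=
      (Finset.prod_mul_prod_compl S _).symm
    have hS0 : 0 ≤ ∏ j ∈ S, q j (x j) := Finset.prod_nonneg fun j _ => hq j _
    have hSc0 : ∀ y : ∀ j, A j, 0 ≤ ∏ j ∈ Sᶜ, q j (y j) :=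
      fun y => Finset.prod_nonneg fun j _ => hq j _
    have hN0 : 0 ≤ N x := by
      rw [hN]; exact Finset.sum_nonneg fun y _ => by split_ifs; exacts [hr y, le_rfl]
    have hrhs : 0 ≤ Real.exp (-a - 2 * e) * (r x / D) := by
      have := hr x; positivity
    have hpull : ∑ x' ∈ G, (if ∀ j ∈ S, x' j = x j then
      (∏ j, q j (x j)) * ∏ j ∈ Sᶜ, q j (x' j) else 0) = (∏ j, q j (x j)) *
        ∑ x' ∈ G, (if ∀ j ∈ S, x' j = x j then ∏ j ∈ Sᶜ, q j (x' j) else 0) := by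
      rw [Finset.mul_sum]
      refine Finset.sum_congr rfl fun x' _ => ?_
      split_ifs <;> simp
    rw [hpull]
    rcases hN0.eq_or_lt with h0 | hpos
    · have h1 := ha x hx
      rw [← h0] at h1
      have h2 : ∏ j ∈ S, q j (x j) = 0 := by
        refine le_antisymm ?_ hS0
        by_contra hc
        push Not at hc
        have : 0 < Real.exp a * (D * ∏ j ∈ S, q j (x j)) := by positivity
        linarith
      rw [hsplit, h2]; simpa using hrhs
    · set I := ∑ x' ∈ G, (if ∀ j ∈ S, x' j = x j then ∏ j ∈ Sᶜ, q j (x' j) else 0) with hI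
      have hI1 : Real.exp e * I ≤ 1 := by
        have : Real.exp e * I * N x ≤ N x := by
          conv_rhs => rw [hN]
          calc Real.exp e * I * N x = ∑ x' ∈ G, (if ∀ j ∈ S, x' j = x j then
                Real.exp e * (N x * ∏ j ∈ Sᶜ, q j (x' j)) else 0) := by
                rw [hI, Finset.mul_sum, Finset.sum_mul]
                refine Finset.sum_congr rfl fun x' _ => ?_
                split_ifs <;> ring
            _ ≤ ∑ x' ∈ G, (if ∀ j ∈ S, x' j = x j then r x' else 0) := by
                refine Finset.sum_le_sum fun x' hx' => ?_
                split_ifs with h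
                · have hNN : N x = N x' := by
                    rw [hN, hN]
                    refine Finset.sum_congr rfl fun y _ => ?_
                    have : (∀ j ∈ S, y j = x j) ↔ (∀ j ∈ S, y j = x' j) :=
                      forall₂_congr fun j hj => by rw [h j hj]
                    simp only [this]
                  rw [hNN]; exact hb x' hx'
                · exact le_rfl
            _ ≤ ∑ x', (if ∀ j ∈ S, x' j = x j then r x' else 0) := by
                refine Finset.sum_le_sum_of_subset_of_nonneg (Finset.subset_univ _) ?_
                intro y _ _
                split_ifs; exacts [hr y, le_rfl]
            _ = _ := by
                refine Finset.sum_congr rfl fun y _ => ?_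
                congr
        by_contra hc
        push Not at hc
        nlinarith
      have h3 : Real.exp (a + e) * D * ∏ j, q j (x j) ≤ r x := by
        refine le_trans ?_ (hb x hx)
        rw [hsplit, Real.exp_add]
        have := mul_le_mul_of_nonneg_right (ha x hx)
          (mul_nonneg (Real.exp_pos e).le (hSc0 x))
        nlinarith
      have hI0 : 0 ≤ I := Finset.sum_nonneg fun y _ => by split_ifs; exacts [hSc0 y, le_rfl]
      have hE : Real.exp (-a - 2 * e) = (Real.exp (a + e) * Real.exp e)⁻¹ := by
        rw [← Real.exp_add, ← Real.exp_neg]; congr 1; ring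
      rw [hE, ← div_eq_inv_mul, le_div_iff₀ (by positivity), le_div_iff₀ hD]
      calc (∏ j, q j (x j)) * I * (Real.exp (a + e) * Real.exp e) * D
          = (Real.exp (a + e) * D * ∏ j, q j (x j)) * (Real.exp e * I) := by ring
        _ ≤ r x * 1 := mul_le_mul h3 hI1 (by positivity) (hr x)
        _ = r x := mul_one _
  calc _ ≤ ∑ x ∈ G, Real.exp (-a - 2 * e) * (r x / D) :=
        Finset.sum_le_sum fun x hx => by
          refine le_trans (le_of_eq ?_) (key x hx)
          refine Finset.sum_congr rfl fun y _ => ?_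
          congr
    _ = Real.exp (-a - 2 * e) * ((∑ x ∈ G, r x) / D) := by
        rw [← Finset.mul_sum, Finset.sum_div]
    _ ≤ Real.exp (-a - 2 * e) * 1 := by
        refine mul_le_mul_of_nonneg_left ?_ (Real.exp_pos _).le
        rw [div_le_one hD]
        exact Finset.sum_le_sum_of_subset_of_nonneg (Finset.subset_univ _) fun y _ _ => hr y
    _ = _ := mul_one _

/-- Weighted Chebyshev inequality for the event `Z = 0`. -/
theorem cv_cheb {C : Type*} [Fintype C] (ν Z : C → ℝ) (hν0 : ∀ c, 0 ≤ ν c)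
    (hν1 : ∑ c, ν c = 1) (E0 : Finset C) (hE0 : ∀ c ∈ E0, Z c = 0) (m1 R : ℝ)
    (hm : ∑ c, ν c * Z c = m1) (hR : ∑ c, ν c * Z c ^ 2 ≤ R + m1 ^ 2) :
    (∑ c ∈ E0, ν c) * m1 ^ 2 ≤ R := by
  have h1 : (∑ c ∈ E0, ν c) * m1 ^ 2 ≤ ∑ c, ν c * (Z c - m1) ^ 2 := by
    rw [Finset.sum_mul]
    calc _ = ∑ c ∈ E0, ν c * (Z c - m1) ^ 2 :=
          Finset.sum_congr rfl fun c hc => by rw [hE0 c hc]; ring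
      _ ≤ _ := Finset.sum_le_sum_of_subset_of_nonneg (Finset.subset_univ _)
          fun c _ _ => mul_nonneg (hν0 c) (sq_nonneg _)
  have h2 : ∑ c, ν c * (Z c - m1) ^ 2 = ∑ c, ν c * Z c ^ 2 - 2 * m1 * ∑ c, ν c * Z c
      + m1 ^ 2 * ∑ c, ν c := by
    rw [Finset.mul_sum, Finset.mul_sum, ← Finset.sum_sub_distrib, ← Finset.sum_add_distrib]
    exact Finset.sum_congr rfl fun c _ => by ring
  rw [h2, hm, hν1] at h1
  nlinarith

/-- Number of message tuples agreeing with `m` on `S`. -/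
theorem cv_count {k : ℕ} (M : Fin k → ℕ) (hM : ∀ j, 0 < M j) (S : Finset (Fin k))
    (m : ∀ j, Fin (M j)) :
    ∑ m' : ∀ j, Fin (M j), (if ∀ j ∈ S, m j = m' j then (1 : ℝ) else 0)
      = (∏ j, (M j : ℝ)) * (∏ j ∈ S, (M j : ℝ))⁻¹ := by
  classical
  have h0 : (∏ j ∈ S, (M j : ℝ)) ≠ 0 :=
    Finset.prod_ne_zero_iff.2 fun j _ => by have := hM j; positivity
  rw [← Finset.prod_mul_prod_compl S, mul_comm, ← mul_assoc, inv_mul_cancel₀ h0, one_mul,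
    Finset.sum_boole]
  have : (Finset.univ.filter fun m' : ∀ j, Fin (M j) => ∀ j ∈ S, m j = m' j)
      = Fintype.piFinset (fun j => if j ∈ S then {m j} else Finset.univ) := by
    ext m'
    simp only [Finset.mem_filter, Finset.mem_univ, true_and, Fintype.mem_piFinset]
    refine forall_congr' fun j => ?_
    split_ifs with h <;> simp [h, eq_comm]
  rw [this, Fintype.card_piFinset, ← Finset.prod_mul_prod_compl S]
  rw [Finset.prod_congr rfl (g := fun _ => 1), Finset.prod_congr (s₁ := Sᶜ) rfl (g := fun j => M j)]
  · simp
  · intro j hj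
    simp [Finset.mem_compl.1 hj]
  · intro j hj
    simp [hj]

theorem cv_core {k : ℕ} {A : Fin k → Type*} [∀ j, Fintype (A j)] [∀ j, DecidableEq (A j)]
    (r : (∀ j, A j) → ℝ) (hr : ∀ x, 0 ≤ r x) (q : ∀ j, A j → ℝ) (hq : ∀ j a, 0 ≤ q j a)
    (M : Fin k → ℕ) (hM : ∀ j, 0 < M j) (hD : 0 < ∑ x, r x)
    (ν : (∀ j, Fin (M j) → A j) → ℝ)
    (hν0 : ∀ c, 0 ≤ ν c) (hν1 : ∑ c, ν c = 1)
    (hνm : ∀ (m : ∀ j, Fin (M j)) (x : ∀ j, A j),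
      ∑ c, (if (fun j => c j (m j)) = x then ν c else 0) = ∏ j, q j (x j))
    (hνpair : ∀ (m m' : ∀ j, Fin (M j)), m ≠ m' →
      ∀ (x x' : ∀ j, A j), (∀ j, m j = m' j → x j = x' j) →
      ∑ c, (if (fun j => c j (m j)) = x ∧ (fun j => c j (m' j)) = x' then ν c else 0)
        = (∏ j, q j (x j)) *
            ∏ j ∈ Finset.univ.filter (fun j => m j ≠ m' j), q j (x' j))
    (G : Finset (∀ j, A j)) (γ : ℝ)
    (hγ : ∀ x ∈ G, r x ≤ Real.exp γ * ((∑ x, r x) * ∏ j, q j (x j)))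
    (t : Finset (Fin k) → ℝ) (ht0 : ∀ S, 0 ≤ t S)
    (ht : ∀ S : Finset (Fin k), S.Nonempty → S ≠ Finset.univ →
      ∑ x ∈ G, ∑ x' ∈ G, (if ∀ j ∈ S, x' j = x j then
      (∏ j, q j (x j)) * ∏ j ∈ Sᶜ, q j (x' j) else 0) ≤ t S)
    (ε : ℝ) (hε1 : ε < 1) (hgood : (1 - ε) * ∑ x, r x ≤ ∑ x ∈ G, r x)
    (E0 : Finset (∀ j, Fin (M j) → A j))
    (hE0 : ∀ c ∈ E0, ∀ m : ∀ j, Fin (M j), (fun j => c j (m j)) ∉ G) :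
    ∑ c ∈ E0, ν c ≤ (1 / (1 - ε)) * (∏ j, (M j : ℝ))⁻¹ * Real.exp γ
      + (1 / (1 - ε)) ^ 2 *
        ∑ S ∈ Finset.univ.filter (fun S : Finset (Fin k) => S.Nonempty ∧ S ≠ Finset.univ),
          (∏ j ∈ S, (M j : ℝ))⁻¹ * (t S * Real.exp (2 * γ)) := by
  classical
  set Q : (∀ j, A j) → ℝ := fun x => ∏ j, q j (x j) with hQ
  set μ := ∑ x ∈ G, Q x with hμ
  have hQ0 : ∀ x, 0 ≤ Q x := fun x => Finset.prod_nonneg fun j _ => hq j _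
  set W := ∏ j, (M j : ℝ) with hW
  have hW0 : 0 < W := Finset.prod_pos fun j _ => by exact_mod_cast hM j
  have hμlow : (1 - ε) ≤ Real.exp γ * μ := by
    have h1 : ∑ x ∈ G, r x ≤ ∑ x ∈ G, Real.exp γ * ((∑ x, r x) * Q x) :=
      Finset.sum_le_sum hγ
    rw [← Finset.mul_sum, ← Finset.mul_sum] at h1
    have h2 := hgood.trans h1
    refine le_of_mul_le_mul_right (h2.trans (le_of_eq ?_)) hD
    ring
  have hε : 0 < 1 - ε := by linarith
  have hμ0 : 0 < μ := by
    by_contra hc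
    push Not at hc
    have := mul_nonpos_of_nonneg_of_nonpos (Real.exp_pos γ).le hc
    linarith
  set I : (∀ j, A j) → ℝ := fun x => if x ∈ G then 1 else 0 with hIdef
  have hIsum : ∀ y, I y = ∑ x ∈ G, if y = x then (1 : ℝ) else 0 := by
    intro y; simp [hIdef]
  set Z : (∀ j, Fin (M j) → A j) → ℝ :=
    fun c => ∑ m : ∀ j, Fin (M j), I (fun j => c j (m j)) with hZ
  have hone : ∀ m : ∀ j, Fin (M j), ∑ c, ν c * I (fun j => c j (m j)) = μ := by
    intro m
    simp_rw [hIsum, Finset.mul_sum]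
    rw [Finset.sum_comm]
    refine Finset.sum_congr rfl fun x _ => ?_
    refine Eq.trans ?_ (hνm m x)
    exact Finset.sum_congr rfl fun c _ => by split_ifs <;> simp
  have hcardM : ∑ _m : ∀ j, Fin (M j), (1 : ℝ) = W := by
    simp [hW]
  have hm1 : ∑ c, ν c * Z c = W * μ := by
    simp_rw [hZ, Finset.mul_sum]
    rw [Finset.sum_comm, Finset.sum_congr rfl fun m _ => hone m, ← hcardM, Finset.sum_mul]
    simp
  set P := Finset.univ.filter (fun S : Finset (Fin k) => S.Nonempty ∧ S ≠ Finset.univ) with hP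
  have hpair : ∀ m m' : ∀ j, Fin (M j),
      ∑ c, ν c * (I (fun j => c j (m j)) * I (fun j => c j (m' j))) ≤
        (if m = m' then μ else 0) + μ ^ 2 +
          ∑ S ∈ P, t S * (if ∀ j ∈ S, m j = m' j then 1 else 0) := by
    intro m m'
    have hsum0 : ∀ S, 0 ≤ t S * (if ∀ j ∈ S, m j = m' j then (1 : ℝ) else 0) := fun S =>
      mul_nonneg (ht0 S) (by split_ifs <;> norm_num)
    by_cases hmm : m = m'
    · subst hmm
      have : ∑ c, ν c * (I (fun j => c j (m j)) * I (fun j => c j (m j))) = μ := by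
        rw [← hone m]
        refine Finset.sum_congr rfl fun c _ => ?_
        congr 1
        simp only [hIdef]; split_ifs <;> simp
      rw [this, if_pos rfl]
      have := Finset.sum_nonneg (s := P) fun S _ => hsum0 S
      nlinarith [sq_nonneg μ]
    · rw [if_neg hmm, zero_add]
      set S := Finset.univ.filter (fun j => m j = m' j) with hS
      have hSc : Finset.univ.filter (fun j => m j ≠ m' j) = Sᶜ := by
        ext j; simp [hS]
      have hJ : ∑ c, ν c * (I (fun j => c j (m j)) * I (fun j => c j (m' j))) =
          ∑ x ∈ G, ∑ x' ∈ G, (if ∀ j ∈ S, x' j = x j then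
            (∏ j, q j (x j)) * ∏ j ∈ Sᶜ, q j (x' j) else 0) := by
        simp_rw [hIsum, Finset.sum_mul_sum, Finset.mul_sum]
        rw [Finset.sum_comm]
        refine Finset.sum_congr rfl fun x _ => ?_
        rw [Finset.sum_comm]
        refine Finset.sum_congr rfl fun x' _ => ?_
        split_ifs with h
        · rw [← hSc, ← hνpair m m' hmm x x' fun j hj => (h j (by simp [hS, hj])).symm]
          refine Finset.sum_congr rfl fun c _ => ?_
          by_cases h1 : (fun j => c j (m j)) = x <;> by_cases h2 : (fun j => c j (m' j)) = x' <;>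
            simp [h1, h2]
        · refine Finset.sum_eq_zero fun c _ => ?_
          by_cases h1 : (fun j => c j (m j)) = x
          · by_cases h2 : (fun j => c j (m' j)) = x'
            · exfalso
              apply h
              intro j hj
              have hj' : m j = m' j := by simpa [hS] using hj
              rw [← h1, ← h2]; simp [hj']
            · simp [h2]
          · simp [h1]
      rw [hJ]
      have hSne : S ≠ Finset.univ := by
        intro h
        apply hmm
        funext j
        have : j ∈ S := h ▸ Finset.mem_univ j
        simpa [hS] using this
      rcases S.eq_empty_or_nonempty with h0 | hne
      · have : ∑ x ∈ G, ∑ x' ∈ G, (if ∀ j ∈ S, x' j = x j then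
            (∏ j, q j (x j)) * ∏ j ∈ Sᶜ, q j (x' j) else 0) = μ ^ 2 := by
          rw [h0, pow_two, hμ, Finset.sum_mul_sum]
          simp [hQ]
        rw [this]
        have := Finset.sum_nonneg (s := P) fun S _ => hsum0 S
        linarith
      · have h1 := ht S hne hSne
        have h2 := Finset.single_le_sum (s := P) (fun S _ => hsum0 S)
          (show S ∈ P by simp [hP, hne, hSne])
        have h3 : ∀ j ∈ S, m j = m' j := fun j hj => by simpa [hS] using hj
        simp only [if_pos h3, mul_one] at h2
        nlinarith [sq_nonneg μ]
  have hR : ∑ c, ν c * Z c ^ 2 ≤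
      (W * μ + ∑ S ∈ P, t S * (W * (W * (∏ j ∈ S, (M j : ℝ))⁻¹))) + (W * μ) ^ 2 := by
    have e1 : ∑ c, ν c * Z c ^ 2 = ∑ m : ∀ j, Fin (M j), ∑ m' : ∀ j, Fin (M j),
        ∑ c, ν c * (I (fun j => c j (m j)) * I (fun j => c j (m' j))) := by
      simp_rw [hZ, pow_two, Finset.sum_mul_sum, Finset.mul_sum]
      rw [Finset.sum_comm]
      refine Finset.sum_congr rfl fun m _ => ?_
      rw [Finset.sum_comm]
    rw [e1]
    refine (Finset.sum_le_sum fun m _ => Finset.sum_le_sum fun m' _ => hpair m m').trans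
      (le_of_eq ?_)
    have e2 : ∀ m : ∀ j, Fin (M j), ∑ m' : ∀ j, Fin (M j), ((if m = m' then μ else 0) + μ ^ 2 +
          ∑ S ∈ P, t S * (if ∀ j ∈ S, m j = m' j then 1 else 0)) =
        1 * (μ + W * μ ^ 2 + ∑ S ∈ P, t S * (W * (∏ j ∈ S, (M j : ℝ))⁻¹)) := by
      intro m
      rw [one_mul, Finset.sum_add_distrib, Finset.sum_add_distrib, Finset.sum_comm]
      congr 1
      · congr 1
        · simp
        · rw [← hcardM, Finset.sum_mul]; simp
      · refine Finset.sum_congr rfl fun S _ => ?_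
        rw [← Finset.mul_sum]
        congr 1
        rw [hW, ← cv_count M hM S m]
    rw [Finset.sum_congr rfl fun m _ => e2 m, ← Finset.sum_mul, hcardM, mul_add, Finset.mul_sum]
    have : ∑ S ∈ P, W * (t S * (W * (∏ j ∈ S, (M j : ℝ))⁻¹)) =
      ∑ S ∈ P, t S * (W * (W * (∏ j ∈ S, (M j : ℝ))⁻¹)) :=
      Finset.sum_congr rfl fun S _ => by ring
    rw [this]; ring
  have hch := cv_cheb ν Z hν0 hν1 E0
    (fun c hc => Finset.sum_eq_zero fun m _ => by simp [hIdef, hE0 c hc m]) (W * μ) _ hm1 hR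
  have hinv : μ⁻¹ ≤ 1 / (1 - ε) * Real.exp γ := by
    rw [inv_le_iff_one_le_mul₀ hμ0, one_div, mul_assoc, ← div_eq_inv_mul, le_div_iff₀ hε]
    linarith
  have hinv0 : 0 ≤ μ⁻¹ := by positivity
  set X := ∑ S ∈ P, t S * (∏ j ∈ S, (M j : ℝ))⁻¹ with hX
  have hX0 : 0 ≤ X := Finset.sum_nonneg fun S _ =>
    mul_nonneg (ht0 S) (inv_nonneg.2 (Finset.prod_nonneg fun j _ => Nat.cast_nonneg _))
  have hXe : ∑ S ∈ P, t S * (W * (W * (∏ j ∈ S, (M j : ℝ))⁻¹)) = W ^ 2 * X := by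
    rw [hX, Finset.mul_sum]; exact Finset.sum_congr rfl fun S _ => by ring
  have hXf : ∑ S ∈ P, (∏ j ∈ S, (M j : ℝ))⁻¹ * (t S * Real.exp (2 * γ))
      = X * Real.exp γ ^ 2 := by
    rw [hX, Finset.sum_mul]
    refine Finset.sum_congr rfl fun S _ => ?_
    rw [← Real.exp_nat_mul]; push_cast; ring
  rw [hXe] at hch
  rw [hXf]
  have hb : ∑ c ∈ E0, ν c ≤ W⁻¹ * μ⁻¹ + X * (μ⁻¹) ^ 2 := by
    have : W⁻¹ * μ⁻¹ + X * (μ⁻¹) ^ 2 = (W * μ + W ^ 2 * X) / (W * μ) ^ 2 := by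
      field_simp
    rw [this, le_div_iff₀ (by positivity)]
    exact hch
  calc _ ≤ _ := hb
    _ ≤ W⁻¹ * (1 / (1 - ε) * Real.exp γ) + X * (1 / (1 - ε) * Real.exp γ) ^ 2 := by gcongr
    _ = _ := by ring

theorem cv_fiber {k : ℕ} {Ω₀ B : Type*} {A : Fin k → Type*}
    [Fintype Ω₀] [Fintype B] [∀ j, Fintype (A j)]
    (p : Ω₀ × (∀ j, A j) × B → ℝ) (u₀ : Ω₀) (b : B)
    (R : Ω₀ × (∀ j, A j) × B → Prop) [DecidablePred R] (R' : (∀ j, A j) → Prop)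
    [DecidablePred R'] (h : ∀ z, R z ↔ z.1 = u₀ ∧ R' z.2.1 ∧ z.2.2 = b) :
    ∑ z ∈ Finset.univ.filter R, p z = ∑ y ∈ Finset.univ.filter R', p (u₀, y, b) := by
  refine Finset.sum_bij' (fun z _ => z.2.1) (fun y _ => (u₀, y, b)) ?_ ?_ ?_ ?_ ?_
  · intro z hz; simp only [Finset.mem_filter, Finset.mem_univ, true_and, h] at hz ⊢
    exact hz.2.1
  · intro z hz; simp only [Finset.mem_filter, Finset.mem_univ, true_and, h] at hz ⊢
    exact ⟨hz, trivial⟩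
  · rintro ⟨z1, z2, z3⟩ hz; simp only [Finset.mem_filter, Finset.mem_univ, true_and, h] at hz
    rw [hz.1, hz.2.2]
  · intro y _; rfl
  · rintro ⟨z1, z2, z3⟩ hz; simp only [Finset.mem_filter, Finset.mem_univ, true_and, h] at hz
    rw [hz.1, hz.2.2]

open scoped Classical in
/-- **Conditional Chebyshev covering bound.**  If the pair `(u₀,u_{k+1})`
satisfies `P(F(u₀,u_{k+1})) ≥ 1 − ε` (with `0 < ε < 1`), then under
Assumption I and the change-of-measure bounds for `γ`, `α_S`, `β_{Sᶜ}`,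
`P(Z = 0 | u₀, u_{k+1}) ≤ (1/(1−ε))·|M|⁻¹·e^γ
  + (1/(1−ε))²·∑_{∅⊊S⊊[k]} |M_S|⁻¹·e^{−α_S − 2β_{Sᶜ} + 2γ}`. -/
theorem covering_stmt15
    {k : ℕ} {Ω₀ B : Type*} {A : Fin k → Type*}
    [Fintype Ω₀] [Fintype B] [∀ j, Fintype (A j)]
    [DecidableEq Ω₀] [DecidableEq B] [∀ j, DecidableEq (A j)]
    (p : Ω₀ × (∀ j, A j) × B → ℝ)
    (hp0 : ∀ z, 0 ≤ p z) (hp1 : ∑ z, p z = 1)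
    (qj : ∀ j : Fin k, Ω₀ → A j → ℝ) (hqj : ∀ j u₀ a, 0 ≤ qj j u₀ a)
    (M : Fin k → ℕ) (hM : ∀ j, 0 < M j)
    (u₀ : Ω₀) (b : B)
    (hpos : 0 < ∑ z ∈ Finset.univ.filter (fun z : Ω₀ × (∀ j, A j) × B =>
        z.1 = u₀ ∧ z.2.2 = b), p z)
    (ν : (∀ j, Fin (M j) → A j) → ℝ)
    (hν0 : ∀ c, 0 ≤ ν c) (hν1 : ∑ c, ν c = 1)
    (hνm : ∀ (m : ∀ j, Fin (M j)) (x : ∀ j, A j),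
      ∑ c ∈ Finset.univ.filter (fun c : ∀ j, Fin (M j) → A j =>
          ∀ j, c j (m j) = x j), ν c
        = ∏ j, qj j u₀ (x j))
    (hνpair : ∀ (m m' : ∀ j, Fin (M j)), m ≠ m' →
      ∀ (x x' : ∀ j, A j), (∀ j, m j = m' j → x j = x' j) →
      ∑ c ∈ Finset.univ.filter (fun c : ∀ j, Fin (M j) → A j =>
          (∀ j, c j (m j) = x j) ∧ ∀ j, c j (m' j) = x' j), ν c
        = (∏ j, qj j u₀ (x j)) *
            ∏ j ∈ Finset.univ.filter (fun j => m j ≠ m' j), qj j u₀ (x' j))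
    (F : Set (Ω₀ × (∀ j, A j) × B))
    (γ : ℝ)
    (hγ : ∀ z ∈ F,
      p z ≤ Real.exp γ * (cvMargS p ∅ z * ∏ j, qj j z.1 (z.2.1 j)))
    (α β : Finset (Fin k) → ℝ)
    (hα : ∀ S : Finset (Fin k), S.Nonempty → S ≠ Finset.univ →
      ∀ z ∈ cvProjS F S,
        Real.exp (α S) * (cvMargS p ∅ z * ∏ j ∈ S, qj j z.1 (z.2.1 j))
          ≤ cvMargS p S z)
    (hβ : ∀ S : Finset (Fin k), S.Nonempty → S ≠ Finset.univ →
      ∀ z ∈ F,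
        Real.exp (β Sᶜ) * (cvMargS p S z * ∏ j ∈ Sᶜ, qj j z.1 (z.2.1 j))
          ≤ p z)
    (ε : ℝ) (hε0 : 0 < ε) (hε1 : ε < 1)
    -- `P(F(u₀,u_{k+1})) ≥ 1 − ε`
    (hgood : 1 - ε ≤
      (∑ z ∈ Finset.univ.filter (fun z : Ω₀ × (∀ j, A j) × B =>
          z ∈ F ∧ z.1 = u₀ ∧ z.2.2 = b), p z) /
      (∑ z ∈ Finset.univ.filter (fun z : Ω₀ × (∀ j, A j) × B =>
          z.1 = u₀ ∧ z.2.2 = b), p z)) :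
    ∑ c ∈ Finset.univ.filter (fun c : ∀ j, Fin (M j) → A j =>
        ∀ m : ∀ j, Fin (M j), (u₀, fun j => c j (m j), b) ∉ F), ν c
    ≤ (1 / (1 - ε)) * (∏ j, (M j : ℝ))⁻¹ * Real.exp γ
      + (1 / (1 - ε)) ^ 2 *
        ∑ S ∈ Finset.univ.filter (fun S : Finset (Fin k) =>
            S.Nonempty ∧ S ≠ Finset.univ),
          (∏ j ∈ S, (M j : ℝ))⁻¹ *
            Real.exp (-α S - 2 * β Sᶜ + 2 * γ) := by
  have hεp : 0 < 1 - ε := by linarith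
  have hDe : ∑ z ∈ Finset.univ.filter (fun z : Ω₀ × (∀ j, A j) × B =>
        z.1 = u₀ ∧ z.2.2 = b), p z = ∑ x, p (u₀, x, b) := by
    rw [cv_fiber p u₀ b _ (fun _ => True) (fun z => by simp)]
    simp
  have hFe : ∑ z ∈ Finset.univ.filter (fun z : Ω₀ × (∀ j, A j) × B =>
        z ∈ F ∧ z.1 = u₀ ∧ z.2.2 = b), p z =
        ∑ x ∈ Finset.univ.filter (fun x => (u₀, x, b) ∈ F), p (u₀, x, b) := by
    refine cv_fiber p u₀ b _ _ ?_
    rintro ⟨z1, z2, z3⟩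
    constructor
    · rintro ⟨h1, rfl, rfl⟩; exact ⟨rfl, h1, rfl⟩
    · rintro ⟨rfl, h1, rfl⟩; exact ⟨h1, rfl, rfl⟩
  have hmarg : ∀ S x, cvMargS p S (u₀, x, b) =
      ∑ y, if ∀ j ∈ S, y j = x j then p (u₀, y, b) else 0 := by
    intro S x
    rw [cvMargS, cv_fiber p u₀ b _ (fun y => ∀ j ∈ S, y j = x j) (fun z => Iff.rfl),
      Finset.sum_filter]
  have hmarg0 : ∀ x, cvMargS p ∅ (u₀, x, b) = ∑ y, p (u₀, y, b) := by
    intro x; rw [hmarg]; simp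
  rw [hDe] at hpos
  rw [hDe, hFe, le_div_iff₀ hpos] at hgood
  have hcore := cv_core (fun x => p (u₀, x, b)) (fun x => hp0 _) (fun j => qj j u₀)
    (fun j a => hqj j u₀ a) M hM hpos ν hν0 hν1
    (by
      intro m x
      rw [← hνm m x, Finset.sum_filter]
      refine Finset.sum_congr rfl fun c _ => ?_
      simp only [funext_iff])
    (by
      intro m m' hmm x x' hx
      have := hνpair m m' hmm x x' hx
      rw [Finset.sum_filter] at this
      simp only [funext_iff]
      convert this)
    (Finset.univ.filter (fun x => (u₀, x, b) ∈ F)) γ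
    (by
      intro x hx
      have := hγ (u₀, x, b) (by simpa using hx)
      rwa [hmarg0] at this)
    (fun S => Real.exp (-α S - 2 * β Sᶜ)) (fun S => (Real.exp_pos _).le)
    (by
      intro S hS hSu
      have := cv_T_bound (fun x => p (u₀, x, b)) (fun x => hp0 _) (fun j => qj j u₀)
        (fun j a => hqj j u₀ a) (Finset.univ.filter (fun x => (u₀, x, b) ∈ F)) hpos S
        (α S) (β Sᶜ) (fun x => cvMargS p S (u₀, x, b))
        (fun x => by rw [hmarg])
        (fun x hx => by
          have := hα S hS hSu (u₀, x, b) ⟨x, fun _ _ => rfl, by simpa using hx⟩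
          rwa [hmarg0] at this)
        (fun x hx => hβ S hS hSu (u₀, x, b) (by simpa using hx))
      convert this)
    ε hε1 hgood
    (Finset.univ.filter (fun c : ∀ j, Fin (M j) → A j =>
        ∀ m : ∀ j, Fin (M j), (u₀, fun j => c j (m j), b) ∉ F))
    (by
      intro c hc m
      simp only [Finset.mem_filter, Finset.mem_univ, true_and] at hc ⊢
      exact hc m)
  refine hcore.trans (le_of_eq ?_)
  congr 2
  refine Finset.sum_congr (by congr) fun S _ => ?_
  rw [← Real.exp_add]
end

section
/- Multivariate covering lemma (direct part, weak typicality): Let p(u₀,…,u_{k+1}) be a joint pmf on finite alphabets and δ > 0. Let codebooks {U_jⁿ(m_j)}_{m_j ∈ [M_j]} with M_j ≥ e^{nR_j} be generated so that Assumptions I and II hold (each tuple indexed by m has i.i.d.-across-time law p(u₀)∏_j p(u_j|u₀), with the stated pairwise conditional independence across distinct m). If for every nonempty S ⊆ [k], ∑_{j∈S} R_j > ∑_{j∈S} H(U_j|U₀) − H(U_S|U₀,U_{k+1}) + (8k − 2|S| + 10)δ, then P(∃ m ∈ ∏_j[M_j] : (U₀ⁿ, U₁ⁿ(m₁),…,U_kⁿ(m_k),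 U_{k+1}ⁿ) ∈ A_δ^{(n)}) → 1 as n → ∞. -/
open Finset Real

/-- Marginal of the joint pmf `p` on `U₀ × U_{[k]} × U_{k+1}` onto the subset
of coordinates consisting of: `u₀` (if `b0`), the `u_j` for `j ∈ S`, and
`u_{k+1}` (if `bB`); evaluated at a full tuple `z`. -/
def wMarg {k : ℕ} {Ω₀ B : Type*} {A : Fin k → Type*}
    [Fintype Ω₀] [Fintype B] [∀ j, Fintype (A j)]
    [DecidableEq Ω₀] [DecidableEq B] [∀ j, DecidableEq (A j)]
    (p : Ω₀ × (∀ j, A j) × B → ℝ) (b0 : Bool) (S : Finset (Fin k)) (bB : Bool)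
    (z : Ω₀ × (∀ j, A j) × B) : ℝ :=
  ∑ w ∈ Finset.univ.filter (fun w : Ω₀ × (∀ j, A j) × B =>
    (b0 = true → w.1 = z.1) ∧ (∀ j ∈ S, w.2.1 j = z.2.1 j) ∧
      (bB = true → w.2.2 = z.2.2)), p w

/-- Joint Shannon entropy (in nats) of the selected subset of coordinates. -/
noncomputable def wEnt {k : ℕ} {Ω₀ B : Type*} {A : Fin k → Type*}
    [Fintype Ω₀] [Fintype B] [∀ j, Fintype (A j)]
    [DecidableEq Ω₀] [DecidableEq B] [∀ j, DecidableEq (A j)]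
    (p : Ω₀ × (∀ j, A j) × B → ℝ) (b0 : Bool) (S : Finset (Fin k)) (bB : Bool) : ℝ :=
  -∑ z : Ω₀ × (∀ j, A j) × B, p z * Real.log (wMarg p b0 S bB z)

/-- The weakly `δ`-typical set `A_δ^{(n)}`. -/
noncomputable def wTypical {k : ℕ} {Ω₀ B : Type*} {A : Fin k → Type*}
    [Fintype Ω₀] [Fintype B] [∀ j, Fintype (A j)]
    [DecidableEq Ω₀] [DecidableEq B] [∀ j, DecidableEq (A j)]
    (p : Ω₀ × (∀ j, A j) × B → ℝ) (n : ℕ) (δ : ℝ) :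
    Set (Fin n → Ω₀ × (∀ j, A j) × B) :=
  {u | ∀ (b0 : Bool) (S : Finset (Fin k)) (bB : Bool),
    (b0 = true ∨ S.Nonempty ∨ bB = true) →
    |(-(1 / (n : ℝ)) * ∑ i, Real.log (wMarg p b0 S bB (u i))) -
      wEnt p b0 S bB| ≤ δ}

/-- Marginal pmf of `U₀`. -/
def pr0 {k : ℕ} {Ω₀ B : Type*} {A : Fin k → Type*}
    [Fintype Ω₀] [Fintype B] [∀ j, Fintype (A j)] [DecidableEq Ω₀]
    (p : Ω₀ × (∀ j, A j) × B → ℝ) (u₀ : Ω₀) : ℝ :=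
  ∑ z ∈ Finset.univ.filter (fun z : Ω₀ × (∀ j, A j) × B => z.1 = u₀), p z

/-- Joint marginal pmf of `(U₀, U_j)`. -/
def pr0j {k : ℕ} {Ω₀ B : Type*} {A : Fin k → Type*}
    [Fintype Ω₀] [Fintype B] [∀ j, Fintype (A j)] [DecidableEq Ω₀]
    [∀ j, DecidableEq (A j)]
    (p : Ω₀ × (∀ j, A j) × B → ℝ) (j : Fin k) (u₀ : Ω₀) (a : A j) : ℝ :=
  ∑ z ∈ Finset.univ.filter
    (fun z : Ω₀ × (∀ j, A j) × B => z.1 = u₀ ∧ z.2.1 j = a), p z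

/-- Joint marginal pmf of `(U₀, U_{k+1})`. -/
def pr0B {k : ℕ} {Ω₀ B : Type*} {A : Fin k → Type*}
    [Fintype Ω₀] [Fintype B] [∀ j, Fintype (A j)] [DecidableEq Ω₀]
    [DecidableEq B]
    (p : Ω₀ × (∀ j, A j) × B → ℝ) (u₀ : Ω₀) (b : B) : ℝ :=
  ∑ z ∈ Finset.univ.filter
    (fun z : Ω₀ × (∀ j, A j) × B => z.1 = u₀ ∧ z.2.2 = b), p z

lemma cov_fiber_sum {α β : Type*} [Fintype α] [Fintype β] [DecidableEq β] (φ : α → β) (ν : α → ℝ) (g : β → ℝ) :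
    ∑ a, ν a * g (φ a) = ∑ b, g b * ∑ a with φ a = b, ν a := by
  rw [← Finset.sum_fiberwise (s := Finset.univ) (g := φ)]
  refine Finset.sum_congr rfl fun b _ => ?_
  rw [Finset.mul_sum]
  refine Finset.sum_congr rfl fun a ha => ?_
  rw [(Finset.mem_filter.mp ha).2, mul_comm]

open scoped Classical in
lemma cov_count {k : ℕ} (M : Fin k → ℕ) (hM : ∀ j, 0 < M j) (S : Finset (Fin k)) (m : ∀ j, Fin (M j)) :
    (((Finset.univ.filter (fun m' : ∀ j, Fin (M j) =>
      Finset.univ.filter (fun j => m j = m' j) = S)).card : ℕ) : ℝ)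
      ≤ (∏ j, (M j : ℝ)) / ∏ j ∈ S, (M j : ℝ) := by
  have h1 : (Finset.univ.filter (fun m' : ∀ j, Fin (M j) =>
      Finset.univ.filter (fun j => m j = m' j) = S)) ⊆
      Fintype.piFinset (fun j => if j ∈ S then {m j} else Finset.univ) := by
    intro m' hm'
    rw [Finset.mem_filter] at hm'
    rw [Fintype.mem_piFinset]
    intro j
    by_cases hj : j ∈ S
    · have := hj
      rw [← hm'.2, Finset.mem_filter] at this
      simp [hj, this.2]
    · simp [hj]
  have h2 := Finset.card_le_card h1
  rw [Fintype.card_piFinset] at h2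
  have h3 : (∏ j, (M j : ℝ)) / ∏ j ∈ S, (M j : ℝ) =
      ((∏ j, (if j ∈ S then ({m j} : Finset (Fin (M j))) else Finset.univ).card : ℕ) : ℝ) := by
    have hne : (∏ j ∈ S, (M j : ℝ)) ≠ 0 :=
      Finset.prod_ne_zero_iff.mpr fun j _ => by exact_mod_cast (hM j).ne'
    rw [div_eq_iff hne]
    push_cast
    rw [← Finset.prod_mul_prod_compl S (fun j => (M j : ℝ)),
      ← Finset.prod_mul_prod_compl S (fun j => (((if j ∈ S then ({m j} : Finset (Fin (M j))) else Finset.univ).card : ℕ) : ℝ))]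
    have e1 : ∏ j ∈ S, (((if j ∈ S then ({m j} : Finset (Fin (M j))) else Finset.univ).card : ℕ) : ℝ) = 1 :=
      Finset.prod_eq_one fun j hj => by simp [hj]
    have e2 : ∏ j ∈ Sᶜ, (((if j ∈ S then ({m j} : Finset (Fin (M j))) else Finset.univ).card : ℕ) : ℝ)
        = ∏ j ∈ Sᶜ, (M j : ℝ) :=
      Finset.prod_congr rfl fun j hj => by simp [Finset.mem_compl.mp hj]
    rw [e1, e2]; ring
  rw [h3]
  exact_mod_cast h2

open scoped Classical in
lemma cov_abstract {k : ℕ} {X : Fin k → Type*} [∀ j, Fintype (X j)]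
    [∀ j, DecidableEq (X j)]
    (M : Fin k → ℕ) (hM : ∀ j, 0 < M j) (a : ∀ j, X j → ℝ) (ha : ∀ j x, 0 ≤ a j x)
    (ha1 : ∀ j, ∑ x, a j x = 1) (W : ℝ) (hW : 0 ≤ W) (F : (∀ j, X j) → Prop)
    (ν : (∀ j, Fin (M j) → X j) → ℝ) (hν : ∀ c, 0 ≤ ν c)
    (h1 : ∀ (m : ∀ j, Fin (M j)) (x : ∀ j, X j),
      ∑ c with (fun j => c j (m j)) = x, ν c = W * ∏ j, a j (x j))
    (h2 : ∀ (m m' : ∀ j, Fin (M j)), m ≠ m' → ∀ (x x' : ∀ j, X j),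
      (∀ j, m j = m' j → x j = x' j) →
      ∑ c with ((fun j => c j (m j)), (fun j => c j (m' j))) = (x, x'), ν c
        = W * (∏ j, a j (x j)) * ∏ j with m j ≠ m' j, a j (x' j))
    (K : Finset (Fin k) → ℝ) (hK0 : ∀ S, 0 ≤ K S)
    (hK : ∀ S : Finset (Fin k), S.Nonempty → ∀ x, F x →
      ∑ x' with F x' ∧ ∀ j ∈ S, x j = x' j, ∏ j ∈ Sᶜ, a j (x' j) ≤ K S)
    (Q : ℝ) (hQ : Q = ∑ x with F x, ∏ j, a j (x j)) (hQ0 : 0 < Q) :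
    ∑ c with ¬ ∃ m : ∀ j, Fin (M j), F (fun j => c j (m j)), ν c
      ≤ W * ∑ S : Finset (Fin k) with S.Nonempty, K S / ((∏ j ∈ S, (M j : ℝ)) * Q) := by
  set f : (∀ j, X j) → ℝ := fun x => if F x then 1 else 0 with hf
  have hf0 : ∀ x, 0 ≤ f x := fun x => by simp only [hf]; split_ifs <;> norm_num
  have hQf : Q = ∑ x, f x * ∏ j, a j (x j) := by
    rw [hQ, Finset.sum_filter]; refine Finset.sum_congr rfl fun x _ => ?_
    simp only [hf]; split_ifs <;> simp
  set N : (∀ j, Fin (M j) → X j) → ℝ := fun c => ∑ m : ∀ j, Fin (M j), f (fun j => c j (m j)) with hN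
  set P : ℝ := ∏ j, (M j : ℝ) with hP
  have hPpos : 0 < P := Finset.prod_pos fun j _ => by exact_mod_cast hM j
  have hcard : (Fintype.card (∀ j, Fin (M j)) : ℝ) = P := by
    rw [Fintype.card_pi]; simp [hP]
  have hE1 : ∀ m : ∀ j, Fin (M j), ∑ c, ν c * f (fun j => c j (m j)) = W * Q := by
    intro m
    rw [cov_fiber_sum (fun c : (∀ j, Fin (M j) → X j) => (fun j => c j (m j))) ν f, hQf, Finset.mul_sum]
    refine Finset.sum_congr rfl fun x _ => ?_
    rw [h1]; ring
  have hEN : ∑ c, ν c * N c = P * (W * Q) := by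
    simp only [hN, Finset.mul_sum]
    rw [Finset.sum_comm]
    simp only [hE1]
    rw [Finset.sum_const, Finset.card_univ, nsmul_eq_mul, hcard]
  have hone : ∑ x : ∀ j, X j, ∏ j, a j (x j) = 1 := by
    rw [← Fintype.piFinset_univ, ← Finset.prod_univ_sum]
    simp [ha1]
  have hEν : ∑ c, ν c = W := by
    let m0 : ∀ j, Fin (M j) := fun j => ⟨0, hM j⟩
    have := cov_fiber_sum (fun c : (∀ j, Fin (M j) → X j) => (fun j => c j (m0 j))) ν (fun _ => 1)
    simp only [mul_one, one_mul] at this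
    rw [this]
    simp only [h1]
    rw [← Finset.mul_sum, hone, mul_one]
  have hpairS : ∀ m m' : ∀ j, Fin (M j), ∀ S, Finset.univ.filter (fun j => m j = m' j) = S →
      ∑ c, ν c * (f (fun j => c j (m j)) * f (fun j => c j (m' j))) =
      ∑ x, ∑ x', if ∀ j ∈ S, x j = x' j then
        (f x * f x') * (W * (∏ j, a j (x j)) * ∏ j ∈ Sᶜ, a j (x' j)) else 0 := by
    intro m m' S hS
    by_cases hmm : m = m'
    · subst hmm
      have hS' : S = Finset.univ := by rw [← hS]; simp
      subst hS'
      have : ∀ x x' : ∀ j, X j, (∀ j ∈ (Finset.univ : Finset (Fin k)), x j = x' j) ↔ x = x' := by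
        intro x x'; simp [funext_iff]
      rw [cov_fiber_sum (fun c : (∀ j, Fin (M j) → X j) => (fun j => c j (m j))) ν (fun x => f x * f x)]
      refine Finset.sum_congr rfl fun x _ => ?_
      rw [Finset.sum_eq_single x, h1]
      · simp
      · intro x' _ hx'
        rw [if_neg]
        rw [this]
        exact fun h => hx' h.symm
      · simp
    · rw [cov_fiber_sum (fun c : (∀ j, Fin (M j) → X j) => ((fun j => c j (m j)), (fun j => c j (m' j)))) ν
        (fun y : (∀ j, X j) × (∀ j, X j) => f y.1 * f y.2), Fintype.sum_prod_type]
      refine Finset.sum_congr rfl fun x _ => Finset.sum_congr rfl fun x' _ => ?_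
      have hSm : ∀ j, j ∈ S ↔ m j = m' j := by intro j; rw [← hS]; simp
      split_ifs with h
      · rw [h2 m m' hmm x x' (fun j hj => h j ((hSm j).2 hj))]
        have : Finset.univ.filter (fun j => m j ≠ m' j) = Sᶜ := by
          ext j; simp [hSm]
        rw [this]
      · rw [Finset.sum_eq_zero, mul_zero]
        intro c hc
        exfalso
        apply h
        intro j hj
        have := (Finset.mem_filter.mp hc).2
        rw [Prod.mk.injEq] at this
        rw [← this.1, ← this.2]
        simp only []
        rw [(hSm j).1 hj]
  have hpairE : ∀ m m' : ∀ j, Fin (M j), Finset.univ.filter (fun j => m j = m' j) = ∅ →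
      ∑ c, ν c * (f (fun j => c j (m j)) * f (fun j => c j (m' j))) = W * Q * Q := by
    intro m m' h
    rw [hpairS m m' ∅ h]
    simp only [Finset.notMem_empty, false_imp_iff, implies_true, if_true, Finset.compl_empty]
    conv_rhs => rw [mul_assoc, hQf, Finset.sum_mul_sum, Finset.mul_sum]
    refine Finset.sum_congr rfl fun x _ => ?_
    rw [Finset.mul_sum]
    refine Finset.sum_congr rfl fun x' _ => ?_
    ring
  have hpairN : ∀ m m' : ∀ j, Fin (M j), ∀ S, Finset.univ.filter (fun j => m j = m' j) = S → S.Nonempty →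
      ∑ c, ν c * (f (fun j => c j (m j)) * f (fun j => c j (m' j))) ≤ W * Q * K S := by
    intro m m' S h hne
    rw [hpairS m m' S h]
    have : W * Q * K S = ∑ x, W * (f x * ∏ j, a j (x j)) * K S := by
      rw [hQf, Finset.mul_sum, Finset.sum_mul]
    rw [this]
    refine Finset.sum_le_sum fun x _ => ?_
    by_cases hx : F x
    · have := hK S hne x hx
      have h3 := mul_le_mul_of_nonneg_left this
        (mul_nonneg hW (mul_nonneg (hf0 x) (Finset.prod_nonneg (s := Finset.univ) fun j _ => ha j (x j))))
      refine le_trans (le_of_eq ?_) h3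
      rw [Finset.mul_sum, Finset.sum_filter]
      refine Finset.sum_congr rfl fun x' _ => ?_
      by_cases h4 : ∀ j ∈ S, x j = x' j
      · by_cases h5 : F x'
        · rw [if_pos h4, if_pos ⟨h5, h4⟩]
          have : f x' = 1 := by simp [hf, h5]
          rw [this]; ring
        · rw [if_pos h4, if_neg (fun h => h5 h.1)]
          have : f x' = 0 := by simp [hf, h5]
          rw [this]; ring
      · rw [if_neg h4, if_neg (fun h => h4 h.2)]
    · have : f x = 0 := by simp [hf, hx]
      simp [this]
  -- second moment
  have hEN2 : ∑ c, ν c * (N c)^2 ≤ P^2 * (W * Q * Q) +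
      ∑ S : Finset (Fin k) with S.Nonempty, W * Q * K S * (P * (P / ∏ j ∈ S, (M j : ℝ))) := by
    have e1 : ∑ c, ν c * (N c)^2 = ∑ m : ∀ j, Fin (M j), ∑ m' : ∀ j, Fin (M j),
        ∑ c, ν c * (f (fun j => c j (m j)) * f (fun j => c j (m' j))) := by
      simp only [hN, sq, Finset.sum_mul_sum]
      simp only [Finset.mul_sum]
      rw [Finset.sum_comm]
      refine Finset.sum_congr rfl fun m _ => ?_
      rw [Finset.sum_comm]
    rw [e1]
    have e2 : ∀ m : ∀ j, Fin (M j), ∑ m' : ∀ j, Fin (M j),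
        ∑ c, ν c * (f (fun j => c j (m j)) * f (fun j => c j (m' j))) ≤
        P * (W * Q * Q) + ∑ S : Finset (Fin k) with S.Nonempty, W * Q * K S * (P / ∏ j ∈ S, (M j : ℝ)) := by
      intro m
      have e3 : ∀ m' : ∀ j, Fin (M j),
          ∑ c, ν c * (f (fun j => c j (m j)) * f (fun j => c j (m' j))) ≤
          W * Q * Q + ∑ S : Finset (Fin k) with S.Nonempty,
            if Finset.univ.filter (fun j => m j = m' j) = S then W * Q * K S else 0 := by
        intro m'
        rw [Finset.sum_ite_eq]
        rcases Finset.eq_empty_or_nonempty (Finset.univ.filter (fun j => m j = m' j)) with h | h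
        · rw [hpairE m m' h, h]; simp
        · have := hpairN m m' _ rfl h
          rw [if_pos (by simpa using h)]
          have : 0 ≤ W * Q * Q := by positivity
          linarith
      refine (Finset.sum_le_sum fun m' _ => e3 m').trans ?_
      rw [Finset.sum_add_distrib, Finset.sum_const, Finset.card_univ, nsmul_eq_mul, hcard, Finset.sum_comm]
      gcongr with S hS
      rw [← Finset.sum_filter, Finset.sum_const, nsmul_eq_mul, mul_comm]
      have := hK0 S
      gcongr
      exact cov_count M hM S m
    refine (Finset.sum_le_sum fun m _ => e2 m).trans (le_of_eq ?_)
    rw [Finset.sum_const, Finset.card_univ, nsmul_eq_mul, hcard, mul_add, Finset.mul_sum]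
    congr 1
    · ring
    · refine Finset.sum_congr rfl fun S _ => ?_
      ring
  -- Chebyshev
  have hcheb : (P * Q)^2 * ∑ c with ¬ ∃ m : ∀ j, Fin (M j), F (fun j => c j (m j)), ν c ≤
      ∑ c, ν c * (N c - P * Q)^2 := by
    rw [Finset.mul_sum, Finset.sum_filter]
    refine Finset.sum_le_sum fun c _ => ?_
    by_cases h : ¬ ∃ m : ∀ j, Fin (M j), F (fun j => c j (m j))
    · rw [if_pos h]
      have : N c = 0 := by
        simp only [hN]
        refine Finset.sum_eq_zero fun m _ => ?_
        simp only [hf]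
        rw [if_neg (fun hm => h ⟨m, hm⟩)]
      rw [this]; apply le_of_eq; ring
    · rw [if_neg h]
      exact mul_nonneg (hν c) (sq_nonneg _)
  have hexp : ∑ c, ν c * (N c - P * Q)^2 = ∑ c, ν c * (N c)^2 - 2 * (P * Q) * ∑ c, ν c * N c
      + (P*Q)^2 * ∑ c, ν c := by
    rw [Finset.mul_sum, Finset.mul_sum, ← Finset.sum_sub_distrib, ← Finset.sum_add_distrib]
    refine Finset.sum_congr rfl fun c _ => ?_
    ring
  rw [hexp, hEN, hEν] at hcheb
  have hfin : (P * Q)^2 * ∑ c with ¬ ∃ m : ∀ j, Fin (M j), F (fun j => c j (m j)), ν c ≤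
      ∑ S : Finset (Fin k) with S.Nonempty, W * Q * K S * (P * (P / ∏ j ∈ S, (M j : ℝ))) := by
    nlinarith
  have hPQ : 0 < (P * Q)^2 := by positivity
  refine le_of_mul_le_mul_left (hfin.trans (le_of_eq ?_)) hPQ
  rw [Finset.mul_sum, Finset.mul_sum]
  refine Finset.sum_congr rfl fun S _ => ?_
  have hne : (∏ j ∈ S, (M j : ℝ)) ≠ 0 :=
    Finset.prod_ne_zero_iff.mpr fun j _ => by exact_mod_cast (hM j).ne'
  field_simp
lemma cov_moments {Z : Type*} [Fintype Z] (p g : Z → ℝ) (hp1 : ∑ z, p z = 1)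
    (hg : ∑ z, p z * g z = 0) (n : ℕ) :
    (∑ z : Fin n → Z, ∏ i, p (z i) = 1) ∧
    (∑ z : Fin n → Z, (∏ i, p (z i)) * ∑ i, g (z i) = 0) ∧
    (∑ z : Fin n → Z, (∏ i, p (z i)) * (∑ i, g (z i)) ^ 2 = n * ∑ z, p z * g z ^ 2) := by
  induction n with
  | zero => simp
  | succ n ih =>
    obtain ⟨i0, i1, i2⟩ := ih
    have key : ∀ f : (Fin (n+1) → Z) → ℝ, ∑ z, f z = ∑ a : Z, ∑ z : Fin n → Z, f (Fin.cons a z) := by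
      intro f
      rw [← (Fin.consEquiv (fun _ : Fin (n+1) => Z)).sum_comp, Fintype.sum_prod_type]
      rfl
    have h0 : ∀ a : Z, ∀ z : Fin n → Z, ∏ i, p ((Fin.cons a z : Fin (n+1) → Z) i) = p a * ∏ i, p (z i) := by
      intro a z; rw [Fin.prod_univ_succ]; simp
    have h1 : ∀ a : Z, ∀ z : Fin n → Z, ∑ i, g ((Fin.cons a z : Fin (n+1) → Z) i) = g a + ∑ i, g (z i) := by
      intro a z; rw [Fin.sum_univ_succ]; simp
    refine ⟨?_, ?_, ?_⟩
    · rw [key]; simp only [h0, ← Finset.mul_sum, i0, mul_one, hp1]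
    · rw [key]
      simp only [h0, h1]
      have : ∀ a : Z, ∑ z : Fin n → Z, (p a * ∏ i, p (z i)) * (g a + ∑ i, g (z i)) = p a * g a := by
        intro a
        calc _ = p a * g a * ∑ z : Fin n → Z, ∏ i, p (z i)
              + p a * ∑ z : Fin n → Z, (∏ i, p (z i)) * ∑ i, g (z i) := by
                rw [Finset.mul_sum, Finset.mul_sum, ← Finset.sum_add_distrib]
                exact Finset.sum_congr rfl fun z _ => by ring
          _ = _ := by rw [i0, i1]; ring
      simp only [this, hg]
    · rw [key]
      simp only [h0, h1]
      have : ∀ a : Z, ∑ z : Fin n → Z, (p a * ∏ i, p (z i)) * (g a + ∑ i, g (z i)) ^ 2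
          = p a * g a ^ 2 + p a * (n * ∑ z, p z * g z ^ 2) := by
        intro a
        calc _ = p a * g a ^ 2 * ∑ z : Fin n → Z, ∏ i, p (z i)
              + 2 * p a * g a * ∑ z : Fin n → Z, (∏ i, p (z i)) * ∑ i, g (z i)
              + p a * ∑ z : Fin n → Z, (∏ i, p (z i)) * (∑ i, g (z i)) ^ 2 := by
                rw [Finset.mul_sum, Finset.mul_sum, Finset.mul_sum, ← Finset.sum_add_distrib,
                  ← Finset.sum_add_distrib]
                exact Finset.sum_congr rfl fun z _ => by ring
          _ = _ := by rw [i0, i1, i2]; ring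
      simp only [this]
      rw [Finset.sum_add_distrib, ← Finset.sum_mul, hp1]
      push_cast; ring

open scoped Classical in
lemma cov_atyp {k : ℕ} {Ω₀ B : Type*} {A : Fin k → Type*}
    [Fintype Ω₀] [Fintype B] [∀ j, Fintype (A j)]
    [DecidableEq Ω₀] [DecidableEq B] [∀ j, DecidableEq (A j)]
    (p : Ω₀ × (∀ j, A j) × B → ℝ)
    (hp : ∀ z, 0 < p z) (hp1 : ∑ z, p z = 1) (δ : ℝ) (hδ : 0 < δ) :
    ∃ C : ℝ, ∀ n : ℕ, 0 < n →
      ∑ z : Fin n → Ω₀ × (∀ j, A j) × B with ¬ z ∈ wTypical p n δ, ∏ i, p (z i) ≤ C / n := by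
  let g : (Bool × Finset (Fin k) × Bool) → (Ω₀ × (∀ j, A j) × B) → ℝ :=
    fun t z => - Real.log (wMarg p t.1 t.2.1 t.2.2 z) - wEnt p t.1 t.2.1 t.2.2
  have hg : ∀ t, ∑ z, p z * g t z = 0 := by
    intro t
    simp only [g, mul_sub, mul_neg]
    rw [Finset.sum_sub_distrib, ← Finset.sum_mul, hp1, Finset.sum_neg_distrib]
    simp [wEnt]
  refine ⟨∑ t, (∑ z, p z * g t z ^ 2) / δ ^ 2, fun n hn => ?_⟩
  have hn' : (0 : ℝ) < n := by exact_mod_cast hn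
  have hpt : ∀ z : Fin n → Ω₀ × (∀ j, A j) × B, ¬ z ∈ wTypical p n δ →
      ∏ i, p (z i) ≤ ∑ t, (∏ i, p (z i)) * (∑ i, g t (z i)) ^ 2 / (n * δ) ^ 2 := by
    intro z hz
    have hpos : 0 ≤ ∏ i, p (z i) := Finset.prod_nonneg fun i _ => (hp _).le
    simp only [wTypical, Set.mem_setOf_eq, not_forall, not_le] at hz
    obtain ⟨b0, S, bB, _, h⟩ := hz
    have e : (-(1 / (n : ℝ)) * ∑ i, Real.log (wMarg p b0 S bB (z i))) - wEnt p b0 S bB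
        = (∑ i, g (b0, S, bB) (z i)) / n := by
      simp only [g]
      rw [Finset.sum_sub_distrib, Finset.sum_neg_distrib, Finset.sum_const, Finset.card_univ,
        Fintype.card_fin, nsmul_eq_mul]
      field_simp
    rw [e, abs_div, abs_of_pos hn', lt_div_iff₀ hn'] at h
    have h2 : (n * δ) ^ 2 ≤ (∑ i, g (b0, S, bB) (z i)) ^ 2 := by
      rw [← sq_abs (∑ i, g (b0, S, bB) (z i))]
      have : 0 < δ * n := by positivity
      nlinarith
    have h3 : ∏ i, p (z i) ≤ (∏ i, p (z i)) * (∑ i, g (b0, S, bB) (z i)) ^ 2 / (n * δ) ^ 2 := by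
      rw [le_div_iff₀ (by positivity)]
      exact mul_le_mul_of_nonneg_left h2 hpos
    refine h3.trans ?_
    exact Finset.single_le_sum (f := fun t => (∏ i, p (z i)) * (∑ i, g t (z i)) ^ 2 / (n * δ) ^ 2)
      (fun t _ => by positivity) (Finset.mem_univ (b0, S, bB))
  calc _ ≤ ∑ z : Fin n → Ω₀ × (∀ j, A j) × B with ¬ z ∈ wTypical p n δ,
        ∑ t, (∏ i, p (z i)) * (∑ i, g t (z i)) ^ 2 / (n * δ) ^ 2 :=
        Finset.sum_le_sum fun z hz => hpt z (Finset.mem_filter.mp hz).2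
    _ ≤ ∑ z : Fin n → Ω₀ × (∀ j, A j) × B,
        ∑ t, (∏ i, p (z i)) * (∑ i, g t (z i)) ^ 2 / (n * δ) ^ 2 := by
        refine Finset.sum_le_sum_of_subset_of_nonneg (Finset.filter_subset _ _) fun z _ _ => ?_
        refine Finset.sum_nonneg fun t _ => ?_
        have hpos : 0 ≤ ∏ i, p (z i) := Finset.prod_nonneg fun i _ => (hp _).le
        positivity
    _ = _ := by
        rw [Finset.sum_comm, Finset.sum_div]
        refine Finset.sum_congr rfl fun t _ => ?_
        rw [← Finset.sum_div, (cov_moments p (g t) hp1 (hg t) n).2.2]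
        field_simp
section CovSetup

set_option linter.unusedSectionVars false

variable {k : ℕ} {Ω₀ B : Type*} {A : Fin k → Type*}
    [Fintype Ω₀] [Fintype B] [∀ j, Fintype (A j)]
    [DecidableEq Ω₀] [DecidableEq B] [∀ j, DecidableEq (A j)]

/-- Combine the component sequences into a sequence of tuples. -/
def cvC {n : ℕ} (u : Fin n → Ω₀) (x : ∀ j, Fin n → A j) (v : Fin n → B) :
    Fin n → Ω₀ × (∀ j, A j) × B := fun i => (u i, fun j => x j i, v i)

/-- Conditional probability of the `j`-th codeword given `u`. -/
noncomputable def cvA (p : Ω₀ × (∀ j, A j) × B → ℝ) {n : ℕ} (u : Fin n → Ω₀) (j : Fin k)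
    (y : Fin n → A j) : ℝ := ∏ i, pr0j p j (u i) (y i) / pr0 p (u i)

lemma cov_wMarg_pos (p : Ω₀ × (∀ j, A j) × B → ℝ) (hp : ∀ z, 0 < p z) (b0 S bB)
    (z : Ω₀ × (∀ j, A j) × B) : 0 < wMarg p b0 S bB z := by
  unfold wMarg
  refine Finset.sum_pos (fun w _ => hp w) ⟨z, ?_⟩
  simp

lemma cov_pr0_eq (p : Ω₀ × (∀ j, A j) × B → ℝ) (z : Ω₀ × (∀ j, A j) × B) :
    pr0 p z.1 = wMarg p true ∅ false z := by
  unfold pr0 wMarg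
  refine Finset.sum_congr ?_ fun _ _ => rfl
  ext w; simp

lemma cov_pr0j_eq (p : Ω₀ × (∀ j, A j) × B → ℝ) (j : Fin k) (z : Ω₀ × (∀ j, A j) × B) :
    pr0j p j z.1 (z.2.1 j) = wMarg p true {j} false z := by
  unfold pr0j wMarg
  refine Finset.sum_congr ?_ fun _ _ => rfl
  ext w; simp

lemma cov_pr0B_eq (p : Ω₀ × (∀ j, A j) × B → ℝ) (z : Ω₀ × (∀ j, A j) × B) :
    pr0B p z.1 z.2.2 = wMarg p true ∅ true z := by
  unfold pr0B wMarg
  refine Finset.sum_congr ?_ fun _ _ => rfl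
  ext w; simp

lemma cov_wMarg_eq (p : Ω₀ × (∀ j, A j) × B → ℝ) (S : Finset (Fin k)) (z : Ω₀ × (∀ j, A j) × B) :
    wMarg p true S true z =
      ∑ y : ∀ j, A j with ∀ j ∈ S, z.2.1 j = y j, p (z.1, y, z.2.2) := by
  unfold wMarg
  symm
  refine Finset.sum_bij' (fun y _ => (z.1, y, z.2.2)) (fun w _ => w.2.1) ?_ ?_ ?_ ?_ ?_
  · intro y hy
    simp only [Finset.mem_filter, Finset.mem_univ, true_and] at hy ⊢
    exact ⟨fun _ => trivial, fun j hj => (hy j hj).symm, fun _ => trivial⟩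
  · intro w hw
    simp only [Finset.mem_filter, Finset.mem_univ, true_and] at hw ⊢
    exact fun j hj => (hw.2.1 j hj).symm
  · intro y _; rfl
  · intro w hw
    simp only [Finset.mem_filter, Finset.mem_univ, true_and] at hw
    rw [← hw.1 trivial, ← hw.2.2 trivial]
  · intro y _; rfl

lemma cov_p_eq (p : Ω₀ × (∀ j, A j) × B → ℝ) (z : Ω₀ × (∀ j, A j) × B) :
    p z = wMarg p true Finset.univ true z := by
  rw [cov_wMarg_eq]
  rw [Finset.sum_eq_single z.2.1]
  · intro y hy hne
    exfalso
    apply hne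
    simp only [Finset.mem_filter, Finset.mem_univ, true_and] at hy
    funext j
    exact (hy j trivial).symm
  · simp

lemma cov_pr0_pos (p : Ω₀ × (∀ j, A j) × B → ℝ) (hp : ∀ z, 0 < p z) (hp1 : ∑ z, p z = 1) (u : Ω₀) :
    0 < pr0 p u := by
  have : Nonempty (Ω₀ × (∀ j, A j) × B) := by
    by_contra h
    rw [not_nonempty_iff] at h
    simp at hp1
  obtain ⟨z⟩ := this
  have := cov_wMarg_pos p hp true ∅ false (u, z.2)
  rwa [← cov_pr0_eq] at this

lemma cov_pr0j_nonneg (p : Ω₀ × (∀ j, A j) × B → ℝ) (hp : ∀ z, 0 < p z) (j u a) :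
    0 ≤ pr0j p j u a := Finset.sum_nonneg fun z _ => (hp z).le

lemma cov_pr0B_nonneg (p : Ω₀ × (∀ j, A j) × B → ℝ) (hp : ∀ z, 0 < p z) (u a) :
    0 ≤ pr0B p u a := Finset.sum_nonneg fun z _ => (hp z).le

lemma cov_sum_pr0j (p : Ω₀ × (∀ j, A j) × B → ℝ) (j : Fin k) (u : Ω₀) :
    ∑ a, pr0j p j u a = pr0 p u := by
  unfold pr0j pr0
  rw [← Finset.sum_fiberwise (s := Finset.univ.filter (fun z : Ω₀ × (∀ j, A j) × B => z.1 = u))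
    (g := fun z => z.2.1 j)]
  refine Finset.sum_congr rfl fun a _ => ?_
  rw [Finset.filter_filter]

lemma cov_cvA_nonneg (p : Ω₀ × (∀ j, A j) × B → ℝ) (hp : ∀ z, 0 < p z) (hp1 : ∑ z, p z = 1)
    {n : ℕ} (u : Fin n → Ω₀) (j : Fin k) (y : Fin n → A j) : 0 ≤ cvA p u j y :=
  Finset.prod_nonneg fun i _ => div_nonneg (cov_pr0j_nonneg p hp _ _ _) (cov_pr0_pos p hp hp1 _).le

lemma cov_cvA_sum (p : Ω₀ × (∀ j, A j) × B → ℝ) (hp : ∀ z, 0 < p z) (hp1 : ∑ z, p z = 1)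
    {n : ℕ} (u : Fin n → Ω₀) (j : Fin k) : ∑ y, cvA p u j y = 1 := by
  unfold cvA
  have := Finset.prod_univ_sum (fun _ : Fin n => (Finset.univ : Finset (A j)))
    (fun i a => pr0j p j (u i) a / pr0 p (u i))
  rw [Fintype.piFinset_univ] at this
  rw [← this]
  refine Finset.prod_eq_one fun i _ => ?_
  rw [← Finset.sum_div, cov_sum_pr0j, div_self (cov_pr0_pos p hp hp1 _).ne']

lemma cov_marg_sum (p : Ω₀ × (∀ j, A j) × B → ℝ) {n : ℕ} (u : Fin n → Ω₀)
    (x : ∀ j, Fin n → A j) (v : Fin n → B) (S : Finset (Fin k)) :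
    ∑ x' : ∀ j, Fin n → A j with ∀ j ∈ S, x j = x' j, ∏ i, p (cvC u x' v i) =
      ∏ i, wMarg p true S true (cvC u x v i) := by
  simp only [cov_wMarg_eq]
  rw [Finset.prod_univ_sum]
  refine Finset.sum_bij' (fun x' _ => fun i j => x' j i) (fun y _ => fun j i => y i j) ?_ ?_ ?_ ?_ ?_
  · intro x' hx'
    simp only [Finset.mem_filter, Finset.mem_univ, true_and] at hx'
    rw [Fintype.mem_piFinset]
    intro i
    simp only [Finset.mem_filter, Finset.mem_univ, true_and]
    intro j hj
    rw [← hx' j hj]; rfl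
  · intro y hy
    rw [Fintype.mem_piFinset] at hy
    simp only [Finset.mem_filter, Finset.mem_univ, true_and] at hy ⊢
    intro j hj
    funext i
    exact hy i j hj
  · intro _ _; rfl
  · intro _ _; rfl
  · intro _ _; rfl

lemma cov_W_eq (p : Ω₀ × (∀ j, A j) × B → ℝ) {n : ℕ} (u : Fin n → Ω₀) (v : Fin n → B)
    (x : ∀ j, Fin n → A j) :
    ∏ i, pr0B p (u i) (v i) = ∏ i, wMarg p true ∅ true (cvC u x v i) :=
  Finset.prod_congr rfl fun i _ => cov_pr0B_eq p (cvC u x v i)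

lemma cov_W_sum (p : Ω₀ × (∀ j, A j) × B → ℝ) (hp1 : ∑ z, p z = 1)
    {n : ℕ} (u : Fin n → Ω₀) (v : Fin n → B) :
    ∑ x : ∀ j, Fin n → A j, ∏ i, p (cvC u x v i) = ∏ i, pr0B p (u i) (v i) := by
  have : Nonempty (Ω₀ × (∀ j, A j) × B) := by
    by_contra h
    rw [not_nonempty_iff] at h
    simp at hp1
  obtain ⟨z⟩ := this
  have h := cov_marg_sum p u (fun j _ => z.2.1 j) v ∅
  rw [cov_W_eq p u v (fun j _ => z.2.1 j), ← h]
  simp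

lemma cov_typ_bounds (p : Ω₀ × (∀ j, A j) × B → ℝ) (hp : ∀ z, 0 < p z) {n : ℕ} (hn : 0 < n) (δ : ℝ)
    (z : Fin n → Ω₀ × (∀ j, A j) × B) (hz : z ∈ wTypical p n δ) (b0 : Bool) (S : Finset (Fin k))
    (bB : Bool) (hb : b0 = true ∨ S.Nonempty ∨ bB = true) :
    Real.exp (-(n * (wEnt p b0 S bB + δ))) ≤ ∏ i, wMarg p b0 S bB (z i) ∧
    ∏ i, wMarg p b0 S bB (z i) ≤ Real.exp (-(n * (wEnt p b0 S bB - δ))) := by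
  have hn' : (0 : ℝ) < n := by exact_mod_cast hn
  have h := hz b0 S bB hb
  rw [abs_le] at h
  have e : ∏ i, wMarg p b0 S bB (z i) = Real.exp (∑ i, Real.log (wMarg p b0 S bB (z i))) := by
    rw [Real.exp_sum]
    exact Finset.prod_congr rfl fun i _ => (Real.exp_log (cov_wMarg_pos p hp _ _ _ _)).symm
  rw [e, Real.exp_le_exp, Real.exp_le_exp]
  set L := ∑ i, Real.log (wMarg p b0 S bB (z i))
  have e2 : L = - (n * (-(1 / (n:ℝ)) * L)) := by field_simp
  constructor
  · rw [e2]
    have := mul_le_mul_of_nonneg_left h.2 hn'.le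
    nlinarith
  · rw [e2]
    have := mul_le_mul_of_nonneg_left h.1 hn'.le
    nlinarith

lemma cov_cvA_eq (p : Ω₀ × (∀ j, A j) × B → ℝ) {n : ℕ} (u : Fin n → Ω₀) (v : Fin n → B)
    (x : ∀ j, Fin n → A j) (j : Fin k) :
    cvA p u j (x j) = (∏ i, wMarg p true {j} false (cvC u x v i)) /
      ∏ i, wMarg p true ∅ false (cvC u x v i) := by
  rw [← Finset.prod_div_distrib]
  unfold cvA
  refine Finset.prod_congr rfl fun i _ => ?_
  rw [← cov_pr0j_eq, ← cov_pr0_eq]; rfl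

/-- `H(U_j | U_0)`. -/
noncomputable def cvH (p : Ω₀ × (∀ j, A j) × B → ℝ) (j : Fin k) : ℝ :=
  wEnt p true {j} false - wEnt p true ∅ false

lemma cov_cvA_bounds (p : Ω₀ × (∀ j, A j) × B → ℝ) (hp : ∀ z, 0 < p z) {n : ℕ} (hn : 0 < n) (δ : ℝ)
    (u : Fin n → Ω₀) (v : Fin n → B) (x : ∀ j, Fin n → A j)
    (hz : cvC u x v ∈ wTypical p n δ) (j : Fin k) :
    Real.exp (-(n * (cvH p j + 2 * δ))) ≤ cvA p u j (x j) ∧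
    cvA p u j (x j) ≤ Real.exp (-(n * (cvH p j - 2 * δ))) := by
  obtain ⟨a1, a2⟩ := cov_typ_bounds p hp hn δ _ hz true {j} false (Or.inl rfl)
  obtain ⟨b1, b2⟩ := cov_typ_bounds p hp hn δ _ hz true ∅ false (Or.inl rfl)
  have hb : 0 < ∏ i, wMarg p true ∅ false (cvC u x v i) :=
    Finset.prod_pos fun i _ => cov_wMarg_pos p hp _ _ _ _
  rw [cov_cvA_eq p u v x j, le_div_iff₀ hb, div_le_iff₀ hb]
  constructor
  · refine le_trans (mul_le_mul_of_nonneg_left b2 (Real.exp_pos _).le) (le_trans (le_of_eq ?_) a1)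
    rw [← Real.exp_add]; congr 1; unfold cvH; ring
  · refine le_trans (le_trans a2 (le_of_eq ?_)) (mul_le_mul_of_nonneg_left b1 (Real.exp_pos _).le)
    rw [← Real.exp_add]; congr 1; unfold cvH; ring

/-- The constant `K_S`. -/
noncomputable def cvK (p : Ω₀ × (∀ j, A j) × B → ℝ) (n : ℕ) (δ : ℝ) (S : Finset (Fin k)) : ℝ :=
  Real.exp (n * (wEnt p true Finset.univ true - wEnt p true S true + 2 * δ
    - ∑ j ∈ Sᶜ, (cvH p j - 2 * δ)))

/-- The constant `L`. -/
noncomputable def cvL (p : Ω₀ × (∀ j, A j) × B → ℝ) (n : ℕ) (δ : ℝ) : ℝ :=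
  Real.exp (n * (wEnt p true Finset.univ true - wEnt p true ∅ true - 2 * δ
    - ∑ j, (cvH p j + 2 * δ)))

open scoped Classical in
lemma cov_hK (p : Ω₀ × (∀ j, A j) × B → ℝ) (hp : ∀ z, 0 < p z) (hp1 : ∑ z, p z = 1)
    {n : ℕ} (hn : 0 < n) (δ : ℝ)
    (u : Fin n → Ω₀) (v : Fin n → B) (S : Finset (Fin k)) (x : ∀ j, Fin n → A j)
    (hz : cvC u x v ∈ wTypical p n δ) :
    ∑ x' : ∀ j, Fin n → A j with cvC u x' v ∈ wTypical p n δ ∧ ∀ j ∈ S, x j = x' j,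
      ∏ j ∈ Sᶜ, cvA p u j (x' j) ≤ cvK p n δ S := by
  have hpt : ∀ x' : ∀ j, Fin n → A j, cvC u x' v ∈ wTypical p n δ →
      ∏ j ∈ Sᶜ, cvA p u j (x' j) ≤ Real.exp (n * (wEnt p true Finset.univ true + δ -
        ∑ j ∈ Sᶜ, (cvH p j - 2 * δ))) * ∏ i, p (cvC u x' v i) := by
    intro x' hx'
    have h1 : ∏ j ∈ Sᶜ, cvA p u j (x' j) ≤ ∏ j ∈ Sᶜ, Real.exp (-(n * (cvH p j - 2 * δ))) :=
      Finset.prod_le_prod (fun j _ => cov_cvA_nonneg p hp hp1 _ _ _)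
        fun j _ => (cov_cvA_bounds p hp hn δ u v x' hx' j).2
    have h2 := (cov_typ_bounds p hp hn δ _ hx' true Finset.univ true (Or.inl rfl)).1
    have h3 : ∏ i, p (cvC u x' v i) = ∏ i, wMarg p true Finset.univ true (cvC u x' v i) :=
      Finset.prod_congr rfl fun i _ => cov_p_eq p _
    rw [h3]
    refine h1.trans (le_trans (le_of_eq ?_) (mul_le_mul_of_nonneg_left h2 (Real.exp_pos _).le))
    rw [← Real.exp_sum, ← Real.exp_add, Finset.sum_neg_distrib, ← Finset.mul_sum]
    congr 1; ring
  calc _ ≤ ∑ x' : ∀ j, Fin n → A j with cvC u x' v ∈ wTypical p n δ ∧ ∀ j ∈ S, x j = x' j,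
        Real.exp (n * (wEnt p true Finset.univ true + δ -
        ∑ j ∈ Sᶜ, (cvH p j - 2 * δ))) * ∏ i, p (cvC u x' v i) :=
        Finset.sum_le_sum fun x' hx' => hpt x' (Finset.mem_filter.mp hx').2.1
    _ ≤ ∑ x' : ∀ j, Fin n → A j with ∀ j ∈ S, x j = x' j,
        Real.exp (n * (wEnt p true Finset.univ true + δ -
        ∑ j ∈ Sᶜ, (cvH p j - 2 * δ))) * ∏ i, p (cvC u x' v i) := by
        refine Finset.sum_le_sum_of_subset_of_nonneg ?_ fun x' _ _ => ?_
        · intro x' hx'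
          simp only [Finset.mem_filter, Finset.mem_univ, true_and] at hx' ⊢
          exact hx'.2
        · exact mul_nonneg (Real.exp_pos _).le (Finset.prod_nonneg fun i _ => (hp _).le)
    _ = Real.exp (n * (wEnt p true Finset.univ true + δ -
        ∑ j ∈ Sᶜ, (cvH p j - 2 * δ))) * ∏ i, wMarg p true S true (cvC u x v i) := by
        rw [← Finset.mul_sum, ← cov_marg_sum]
    _ ≤ _ := by
        refine (mul_le_mul_of_nonneg_left (cov_typ_bounds p hp hn δ _ hz true S true (Or.inl rfl)).2
          (Real.exp_pos _).le).trans (le_of_eq ?_)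
        unfold cvK
        rw [← Real.exp_add]; congr 1; ring

open scoped Classical in
lemma cov_hQ (p : Ω₀ × (∀ j, A j) × B → ℝ) (hp : ∀ z, 0 < p z)
    {n : ℕ} (hn : 0 < n) (δ : ℝ) (u : Fin n → Ω₀) (v : Fin n → B) :
    cvL p n δ * ∑ x : ∀ j, Fin n → A j with cvC u x v ∈ wTypical p n δ, ∏ i, p (cvC u x v i) ≤
    (∏ i, pr0B p (u i) (v i)) *
      ∑ x : ∀ j, Fin n → A j with cvC u x v ∈ wTypical p n δ, ∏ j, cvA p u j (x j) := by
  rw [Finset.mul_sum, Finset.mul_sum]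
  refine Finset.sum_le_sum fun x hx => ?_
  have hx := (Finset.mem_filter.mp hx).2
  have h1 : ∏ j, Real.exp (-(n * (cvH p j + 2 * δ))) ≤ ∏ j, cvA p u j (x j) :=
    Finset.prod_le_prod (fun j _ => (Real.exp_pos _).le)
      fun j _ => (cov_cvA_bounds p hp hn δ u v x hx j).1
  have h2 := (cov_typ_bounds p hp hn δ _ hx true Finset.univ true (Or.inl rfl)).2
  have h3 : ∏ i, p (cvC u x v i) = ∏ i, wMarg p true Finset.univ true (cvC u x v i) :=
    Finset.prod_congr rfl fun i _ => cov_p_eq p _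
  have h4 := (cov_typ_bounds p hp hn δ _ hx true ∅ true (Or.inl rfl)).1
  rw [← cov_W_eq p u v x] at h4
  rw [h3]
  refine (mul_le_mul_of_nonneg_left h2 (Real.exp_pos _).le).trans
    (le_trans (le_of_eq ?_) (mul_le_mul h4 h1 (Finset.prod_nonneg fun j _ => (Real.exp_pos _).le)
      (Finset.prod_nonneg fun i _ => cov_pr0B_nonneg p hp _ _)))
  rw [← Real.exp_sum, ← Real.exp_add, ← Real.exp_add, Finset.sum_neg_distrib, ← Finset.mul_sum]
  congr 1; ring

/-- The equivalence between triples of sequences and sequences of triples. -/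
def cvE (n : ℕ) : (Fin n → Ω₀) × (∀ j, Fin n → A j) × (Fin n → B) ≃
    (Fin n → Ω₀ × (∀ j, A j) × B) where
  toFun t := cvC t.1 t.2.1 t.2.2
  invFun z := (fun i => (z i).1, fun j i => (z i).2.1 j, fun i => (z i).2.2)
  left_inv _ := rfl
  right_inv _ := rfl

open scoped Classical in
/-- Per-`(u,v)` failure bound. -/
lemma cov_fixed (p : Ω₀ × (∀ j, A j) × B → ℝ) (hp : ∀ z, 0 < p z) (hp1 : ∑ z, p z = 1)
    {n : ℕ} (hn : 0 < n) (δ : ℝ) (u : Fin n → Ω₀) (v : Fin n → B)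
    (M : Fin k → ℕ) (hM : ∀ j, 0 < M j)
    (ν : (∀ j, Fin (M j) → Fin n → A j) → ℝ) (hν : ∀ c, 0 ≤ ν c)
    (h1 : ∀ (m : ∀ j, Fin (M j)) (x : ∀ j, Fin n → A j),
      ∑ c with (fun j => c j (m j)) = x, ν c =
        (∏ i, pr0B p (u i) (v i)) * ∏ j, cvA p u j (x j))
    (h2 : ∀ (m m' : ∀ j, Fin (M j)), m ≠ m' → ∀ (x x' : ∀ j, Fin n → A j),
      (∀ j, m j = m' j → x j = x' j) →
      ∑ c with ((fun j => c j (m j)), (fun j => c j (m' j))) = (x, x'), ν c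
        = (∏ i, pr0B p (u i) (v i)) * (∏ j, cvA p u j (x j)) *
          ∏ j with m j ≠ m' j, cvA p u j (x' j))
    (hsum : ∑ c, ν c = ∏ i, pr0B p (u i) (v i))
    (cc : ℝ) (hcc : ∑ S : Finset (Fin k) with S.Nonempty,
      cvK p n δ S / ((∏ j ∈ S, (M j : ℝ)) * cvL p n δ) ≤ cc) :
    ∑ c with ¬ ∃ m : ∀ j, Fin (M j), cvC u (fun j => c j (m j)) v ∈ wTypical p n δ, ν c ≤
      2 * cc * (∏ i, pr0B p (u i) (v i)) + 2 * ((∏ i, pr0B p (u i) (v i)) -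
        ∑ x : ∀ j, Fin n → A j with cvC u x v ∈ wTypical p n δ, ∏ i, p (cvC u x v i)) := by
  set W := ∏ i, pr0B p (u i) (v i) with hWdef
  set τ := ∑ x : ∀ j, Fin n → A j with cvC u x v ∈ wTypical p n δ, ∏ i, p (cvC u x v i) with hτ
  set Q := ∑ x : ∀ j, Fin n → A j with cvC u x v ∈ wTypical p n δ, ∏ j, cvA p u j (x j) with hQ
  have hW : 0 ≤ W := Finset.prod_nonneg fun i _ => cov_pr0B_nonneg p hp _ _
  have hτW : τ ≤ W := by
    rw [hWdef, ← cov_W_sum p hp1 u v]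
    exact Finset.sum_le_sum_of_subset_of_nonneg (Finset.filter_subset _ _)
      fun x _ _ => Finset.prod_nonneg fun i _ => (hp _).le
  have hL : 0 < cvL p n δ := Real.exp_pos _
  have hMS : ∀ S : Finset (Fin k), 0 < ∏ j ∈ S, (M j : ℝ) := fun S =>
    Finset.prod_pos fun j _ => by exact_mod_cast hM j
  have hKp : ∀ S, 0 < cvK p n δ S := fun S => Real.exp_pos _
  have hcc0 : 0 ≤ cc := le_trans (Finset.sum_nonneg fun S _ =>
    (div_nonneg (hKp S).le (mul_nonneg (hMS S).le hL.le))) hcc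
  by_cases hhalf : τ ≤ W / 2
  · have : ∑ c with ¬ ∃ m : ∀ j, Fin (M j), cvC u (fun j => c j (m j)) v ∈ wTypical p n δ, ν c ≤ W := by
      rw [← hsum]
      exact Finset.sum_le_sum_of_subset_of_nonneg (Finset.filter_subset _ _) fun c _ _ => hν c
    have : 0 ≤ 2 * cc * W := by positivity
    linarith
  · push Not at hhalf
    have hLQ := cov_hQ p hp hn δ u v
    rw [← hWdef, ← hτ, ← hQ] at hLQ
    have hτ0 : 0 < τ := lt_of_le_of_lt (by positivity) hhalf
    have hW0 : 0 < W := lt_of_lt_of_le hτ0 hτW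
    have hQL : cvL p n δ / 2 ≤ Q := by
      have : W * (cvL p n δ / 2) ≤ W * Q := by nlinarith
      exact le_of_mul_le_mul_left this hW0
    have hQ0 : 0 < Q := lt_of_lt_of_le (by positivity) hQL
    have := cov_abstract M hM (fun j => cvA p u j) (fun j x => cov_cvA_nonneg p hp hp1 u j x)
      (fun j => cov_cvA_sum p hp hp1 u j) W hW (fun x => cvC u x v ∈ wTypical p n δ) ν hν
      h1 h2 (cvK p n δ) (fun S => (hKp S).le)
      (fun S _ x hx => cov_hK p hp hp1 hn δ u v S x hx) Q hQ hQ0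
    refine this.trans ?_
    have h5 : ∑ S : Finset (Fin k) with S.Nonempty, cvK p n δ S / ((∏ j ∈ S, (M j : ℝ)) * Q) ≤
        2 * cc := by
      refine le_trans ?_ (mul_le_mul_of_nonneg_left hcc (by norm_num : (0:ℝ) ≤ 2))
      rw [Finset.mul_sum]
      refine Finset.sum_le_sum fun S _ => ?_
      have e : 2 * (cvK p n δ S / ((∏ j ∈ S, (M j : ℝ)) * cvL p n δ)) =
        cvK p n δ S / ((∏ j ∈ S, (M j : ℝ)) * (cvL p n δ / 2)) := by
          have := hMS S
          field_simp
      rw [e]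
      have := hMS S
      have := hKp S
      gcongr
    have h6 := mul_le_mul_of_nonneg_left h5 hW
    nlinarith

end CovSetup
lemma cov_slice {α β γ : Type*} [Fintype α] [Fintype β] [Fintype γ] (μ : α × β × γ → ℝ) (u : α) (v : γ)
    (P : β → Prop) [DecidablePred P] (Q : α × β × γ → Prop) [DecidablePred Q]
    (h : ∀ ω, Q ω ↔ ω.1 = u ∧ P ω.2.1 ∧ ω.2.2 = v) :
    ∑ c with P c, μ (u, c, v) = ∑ ω with Q ω, μ ω := by
  refine Finset.sum_bij' (fun c _ => (u, c, v)) (fun ω _ => ω.2.1) ?_ ?_ ?_ ?_ ?_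
  · intro c hc
    simp only [Finset.mem_filter, Finset.mem_univ, true_and] at hc ⊢
    rw [h]; exact ⟨rfl, hc, rfl⟩
  · intro ω hω
    simp only [Finset.mem_filter, Finset.mem_univ, true_and] at hω ⊢
    exact ((h ω).1 hω).2.1
  · intro _ _; rfl
  · intro ω hω
    simp only [Finset.mem_filter, Finset.mem_univ, true_and] at hω
    obtain ⟨h1, _, h3⟩ := (h ω).1 hω
    rw [← h1, ← h3]
  · intro _ _; rfl

lemma cov_rate {k : ℕ} {Ω₀ B : Type*} {A : Fin k → Type*}
    [Fintype Ω₀] [Fintype B] [∀ j, Fintype (A j)]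
    [DecidableEq Ω₀] [DecidableEq B] [∀ j, DecidableEq (A j)]
    (p : Ω₀ × (∀ j, A j) × B → ℝ) (δ : ℝ) (hδ : 0 < δ) (R : Fin k → ℝ) (n : ℕ) (M : Fin k → ℕ)
    (hM : ∀ j, Real.exp ((n : ℝ) * R j) ≤ (M j : ℝ)) (S : Finset (Fin k)) :
    cvK p n δ S / ((∏ j ∈ S, (M j : ℝ)) * cvL p n δ) ≤
      Real.exp (-(∑ j ∈ S, R j - ((∑ j ∈ S, (wEnt p true {j} false - wEnt p true ∅ false)) -
          (wEnt p true S true - wEnt p true ∅ true) +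
          (8 * (k : ℝ) - 2 * (S.card : ℝ) + 10) * δ))) ^ n := by
  have h1 : Real.exp (n * ∑ j ∈ S, R j) ≤ ∏ j ∈ S, (M j : ℝ) := by
    rw [Finset.mul_sum, Real.exp_sum]
    exact Finset.prod_le_prod (fun j _ => (Real.exp_pos _).le) fun j _ => hM j
  have hL : 0 < cvL p n δ := Real.exp_pos _
  have hK : 0 < cvK p n δ S := Real.exp_pos _
  calc _ ≤ cvK p n δ S / (Real.exp (n * ∑ j ∈ S, R j) * cvL p n δ) := by
        gcongr
    _ ≤ _ := by
        rw [← Real.exp_nat_mul]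
        unfold cvK cvL
        rw [← Real.exp_add, ← Real.exp_sub, Real.exp_le_exp]
        rw [← mul_add, ← mul_sub]
        refine mul_le_mul_of_nonneg_left ?_ (Nat.cast_nonneg n)
        rw [← Finset.sum_add_sum_compl S (fun j => cvH p j + 2 * δ)]
        simp only [Finset.sum_add_distrib, Finset.sum_sub_distrib, Finset.sum_const, nsmul_eq_mul]
        have hc : ((Sᶜ).card : ℝ) = k - S.card := by
          rw [Finset.card_compl, Nat.cast_sub (Finset.card_le_univ S)]
          simp
        have e : ∑ j ∈ S, cvH p j = ∑ j ∈ S, wEnt p true {j} false - ∑ j ∈ S, wEnt p true ∅ false := by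
          unfold cvH; rw [Finset.sum_sub_distrib]
        rw [hc, e]
        simp only [Finset.sum_const, nsmul_eq_mul]
        have : (0:ℝ) ≤ k := Nat.cast_nonneg k
        nlinarith

open scoped Classical in
/-- **Multivariate covering lemma (direct part, weak typicality).**
Let `p(u₀,…,u_{k+1})` be a full-support joint pmf on finite alphabets and
`δ > 0`.  For each blocklength `n`, codebooks `{U_jⁿ(m_j)}_{m_j ∈ [M_n j]}`
with `M_n j ≥ e^{nR_j}` are generated so that Assumptions I and II hold:
each `m`-indexed tuple is `n` i.i.d. copies of a tuple with law
`p(u₀)·∏_j p(u_j|u₀)·p(u_{k+1}|u₀)`, and for distinct `m, m'` with agreement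
set `S = {j : m_j = m'_j}` the conditional pairwise law is
`∏_j p(u_j|u₀)·∏_{j∈Sᶜ} p(u'_j|u₀)` per symbol.  If for every nonempty
`S ⊆ [k]`,
`∑_{j∈S} R_j > ∑_{j∈S} H(U_j|U₀) − H(U_S|U₀,U_{k+1}) + (8k − 2|S| + 10)δ`,
then `P(∃ m : (U₀ⁿ, U₁ⁿ(m₁),…,U_kⁿ(m_k), U_{k+1}ⁿ) ∈ A_δ^{(n)}) → 1`. -/
theorem covering_stmt18
    {k : ℕ} {Ω₀ B : Type*} {A : Fin k → Type*}
    [Fintype Ω₀] [Fintype B] [∀ j, Fintype (A j)]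
    [DecidableEq Ω₀] [DecidableEq B] [∀ j, DecidableEq (A j)]
    (p : Ω₀ × (∀ j, A j) × B → ℝ)
    (hp : ∀ z, 0 < p z) (hp1 : ∑ z, p z = 1)
    (δ : ℝ) (hδ : 0 < δ)
    (R : Fin k → ℝ)
    (M : ℕ → Fin k → ℕ)
    (hM : ∀ (n : ℕ) (j : Fin k), Real.exp ((n : ℝ) * R j) ≤ (M n j : ℝ))
    (μ : ∀ n : ℕ,
      (Fin n → Ω₀) × (∀ j, Fin (M n j) → Fin n → A j) × (Fin n → B) → ℝ)
    (hμ0 : ∀ n ω, 0 ≤ μ n ω) (hμ1 : ∀ n, ∑ ω, μ n ω = 1)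
    -- Assumption II: each `m`-indexed tuple is i.i.d. across time with law
    -- `p(u₀)·∏_j p(u_j|u₀)·p(u_{k+1}|u₀)`
    (hlaw : ∀ (n : ℕ) (m : ∀ j, Fin (M n j)) (u : Fin n → Ω₀)
        (x : ∀ j, Fin n → A j) (v : Fin n → B),
      ∑ ω ∈ Finset.univ.filter
          (fun ω : (Fin n → Ω₀) × (∀ j, Fin (M n j) → Fin n → A j) × (Fin n → B) =>
            ω.1 = u ∧ (∀ j, ω.2.1 j (m j) = x j) ∧ ω.2.2 = v), μ n ω
        = ∏ i, (pr0 p (u i) * (∏ j, pr0j p j (u i) (x j i) / pr0 p (u i)) *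
            (pr0B p (u i) (v i) / pr0 p (u i))))
    -- Assumption I: pairwise conditional independence across distinct `m, m'`
    (hpair : ∀ (n : ℕ) (m m' : ∀ j, Fin (M n j)), m ≠ m' →
      ∀ (u : Fin n → Ω₀) (x x' : ∀ j, Fin n → A j) (v : Fin n → B),
        (∀ j, m j = m' j → x j = x' j) →
      ∑ ω ∈ Finset.univ.filter
          (fun ω : (Fin n → Ω₀) × (∀ j, Fin (M n j) → Fin n → A j) × (Fin n → B) =>
            ω.1 = u ∧ (∀ j, ω.2.1 j (m j) = x j) ∧
              (∀ j, ω.2.1 j (m' j) = x' j) ∧ ω.2.2 = v), μ n ω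
        = ∏ i, (pr0 p (u i) * (pr0B p (u i) (v i) / pr0 p (u i)) *
            (∏ j, pr0j p j (u i) (x j i) / pr0 p (u i)) *
            ∏ j ∈ Finset.univ.filter (fun j => m j ≠ m' j),
              pr0j p j (u i) (x' j i) / pr0 p (u i)))
    -- rate condition
    (hR : ∀ S : Finset (Fin k), S.Nonempty →
      (∑ j ∈ S, R j) >
        (∑ j ∈ S, (wEnt p true {j} false - wEnt p true ∅ false)) -
          (wEnt p true S true - wEnt p true ∅ true) +
          (8 * (k : ℝ) - 2 * (S.card : ℝ) + 10) * δ) :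
    Filter.Tendsto (fun n : ℕ =>
      ∑ ω ∈ Finset.univ.filter
          (fun ω : (Fin n → Ω₀) × (∀ j, Fin (M n j) → Fin n → A j) × (Fin n → B) =>
            ∃ m : ∀ j, Fin (M n j),
              (fun i => ((ω.1 i, fun j => ω.2.1 j (m j) i, ω.2.2 i) :
                Ω₀ × (∀ j, A j) × B)) ∈ wTypical p n δ), μ n ω)
      Filter.atTop (nhds 1) := by
  obtain ⟨C, hC⟩ := cov_atyp p hp hp1 δ hδ
  set s : Finset (Fin k) → ℝ := fun S => Real.exp (-(∑ j ∈ S, R j -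
    ((∑ j ∈ S, (wEnt p true {j} false - wEnt p true ∅ false)) -
          (wEnt p true S true - wEnt p true ∅ true) +
          (8 * (k : ℝ) - 2 * (S.card : ℝ) + 10) * δ))) with hs
  set cc : ℕ → ℝ := fun n => ∑ S : Finset (Fin k) with S.Nonempty, s S ^ n with hccdef
  have hcc0 : Filter.Tendsto cc Filter.atTop (nhds 0) := by
    have : Filter.Tendsto cc Filter.atTop
        (nhds (∑ S : Finset (Fin k) with S.Nonempty, (0:ℝ))) := by
      refine tendsto_finset_sum _ fun S hS => ?_
      refine tendsto_pow_atTop_nhds_zero_of_lt_one (Real.exp_pos _).le ?_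
      rw [hs, Real.exp_lt_one_iff]
      have := hR S (Finset.mem_filter.mp hS).2
      linarith
    simpa using this
  have hM0 : ∀ n j, 0 < M n j := fun n j => by
    have := lt_of_lt_of_le (Real.exp_pos _) (hM n j)
    exact_mod_cast this
  have hsplit : ∀ n, (∑ ω ∈ Finset.univ.filter
          (fun ω : (Fin n → Ω₀) × (∀ j, Fin (M n j) → Fin n → A j) × (Fin n → B) =>
            ∃ m : ∀ j, Fin (M n j),
              (fun i => ((ω.1 i, fun j => ω.2.1 j (m j) i, ω.2.2 i) :
                Ω₀ × (∀ j, A j) × B)) ∈ wTypical p n δ), μ n ω) = 1 -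
      ∑ ω ∈ Finset.univ.filter
          (fun ω : (Fin n → Ω₀) × (∀ j, Fin (M n j) → Fin n → A j) × (Fin n → B) =>
            ¬ ∃ m : ∀ j, Fin (M n j),
              (fun i => ((ω.1 i, fun j => ω.2.1 j (m j) i, ω.2.2 i) :
                Ω₀ × (∀ j, A j) × B)) ∈ wTypical p n δ), μ n ω := by
    intro n
    rw [← hμ1 n, eq_sub_iff_add_eq, Finset.sum_filter_add_sum_filter_not]
  have hub : ∀ n : ℕ, 0 < n → (∑ ω ∈ Finset.univ.filter
          (fun ω : (Fin n → Ω₀) × (∀ j, Fin (M n j) → Fin n → A j) × (Fin n → B) =>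
            ¬ ∃ m : ∀ j, Fin (M n j),
              (fun i => ((ω.1 i, fun j => ω.2.1 j (m j) i, ω.2.2 i) :
                Ω₀ × (∀ j, A j) × B)) ∈ wTypical p n δ), μ n ω) ≤ 2 * cc n + 2 * (C / n) := by
    intro n hn
    have hp0 := cov_pr0_pos p hp hp1
    have hfix : ∀ (u : Fin n → Ω₀) (v : Fin n → B),
        ∑ c : (∀ j, Fin (M n j) → Fin n → A j) with ¬ ∃ m : ∀ j, Fin (M n j),
          cvC u (fun j => c j (m j)) v ∈ wTypical p n δ, μ n (u, c, v) ≤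
        2 * cc n * (∏ i, pr0B p (u i) (v i)) + 2 * ((∏ i, pr0B p (u i) (v i)) -
          ∑ x : ∀ j, Fin n → A j with cvC u x v ∈ wTypical p n δ, ∏ i, p (cvC u x v i)) := by
      intro u v
      have h1 : ∀ (m : ∀ j, Fin (M n j)) (x : ∀ j, Fin n → A j),
          ∑ c : (∀ j, Fin (M n j) → Fin n → A j) with (fun j => c j (m j)) = x, μ n (u, c, v) =
            (∏ i, pr0B p (u i) (v i)) * ∏ j, cvA p u j (x j) := by
        intro m x
        rw [cov_slice (μ n) u v (fun c => (fun j => c j (m j)) = x) (fun ω => ω.1 = u ∧ (∀ j, ω.2.1 j (m j) = x j) ∧ ω.2.2 = v)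
          (fun ω => by rw [funext_iff (f := fun j => ω.2.1 j (m j))])]
        rw [hlaw n m u x v]
        unfold cvA
        rw [Finset.prod_comm, ← Finset.prod_mul_distrib]
        refine Finset.prod_congr rfl fun i _ => ?_
        have := (hp0 (u i)).ne'
        field_simp
      have h2 : ∀ (m m' : ∀ j, Fin (M n j)), m ≠ m' → ∀ (x x' : ∀ j, Fin n → A j),
          (∀ j, m j = m' j → x j = x' j) →
          ∑ c : (∀ j, Fin (M n j) → Fin n → A j) with
            ((fun j => c j (m j)), (fun j => c j (m' j))) = (x, x'), μ n (u, c, v)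
            = (∏ i, pr0B p (u i) (v i)) * (∏ j, cvA p u j (x j)) *
              ∏ j with m j ≠ m' j, cvA p u j (x' j) := by
        intro m m' hmm x x' hxx
        rw [cov_slice (μ n) u v (fun c => ((fun j => c j (m j)), (fun j => c j (m' j))) = (x, x'))
          (fun ω => ω.1 = u ∧ (∀ j, ω.2.1 j (m j) = x j) ∧
              (∀ j, ω.2.1 j (m' j) = x' j) ∧ ω.2.2 = v)
          (fun ω => by
            rw [Prod.mk.injEq, funext_iff (f := fun j => ω.2.1 j (m j)),
              funext_iff (f := fun j => ω.2.1 j (m' j)), and_assoc])]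
        rw [hpair n m m' hmm u x x' v hxx]
        unfold cvA
        rw [Finset.prod_comm, Finset.prod_comm (s := Finset.univ.filter _),
          ← Finset.prod_mul_distrib, ← Finset.prod_mul_distrib]
        refine Finset.prod_congr rfl fun i _ => ?_
        have := (hp0 (u i)).ne'
        congr 1
        field_simp
      have hsum : ∑ c : (∀ j, Fin (M n j) → Fin n → A j), μ n (u, c, v) =
          ∏ i, pr0B p (u i) (v i) := by
        let m0 : ∀ j, Fin (M n j) := fun j => ⟨0, hM0 n j⟩
        have := cov_fiber_sum (fun c : (∀ j, Fin (M n j) → Fin n → A j) => (fun j => c j (m0 j)))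
          (fun c => μ n (u, c, v)) (fun _ => 1)
        simp only [mul_one, one_mul] at this
        rw [this]
        simp only [h1]
        rw [← Finset.mul_sum, ← Fintype.piFinset_univ, ← Finset.prod_univ_sum]
        simp [cov_cvA_sum p hp hp1]
      refine cov_fixed p hp hp1 hn δ u v (M n) (hM0 n) (fun c => μ n (u, c, v))
        (fun c => hμ0 n _) h1 h2 hsum (cc n) ?_
      exact Finset.sum_le_sum fun S _ => cov_rate p δ hδ R n (M n) (hM n) S
    have hone : ∑ z : Fin n → Ω₀ × (∀ j, A j) × B, ∏ i, p (z i) = 1 :=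
      (cov_moments p (fun _ => 0) hp1 (by simp) n).1
    have htyp : ∑ u : Fin n → Ω₀, ∑ v : Fin n → B,
        ∑ x : ∀ j, Fin n → A j with cvC u x v ∈ wTypical p n δ, ∏ i, p (cvC u x v i) =
        ∑ z : Fin n → Ω₀ × (∀ j, A j) × B with z ∈ wTypical p n δ, ∏ i, p (z i) := by
      rw [Finset.sum_filter, ← (cvE n).sum_comp, Fintype.sum_prod_type]
      refine Finset.sum_congr rfl fun u _ => ?_
      rw [Fintype.sum_prod_type, Finset.sum_comm]
      refine Finset.sum_congr rfl fun v _ => ?_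
      rw [Finset.sum_filter]
      rfl
    have hWs : ∑ u : Fin n → Ω₀, ∑ v : Fin n → B, ∏ i, pr0B p (u i) (v i) = 1 := by
      rw [← hone, ← (cvE n).sum_comp, Fintype.sum_prod_type]
      refine Finset.sum_congr rfl fun u _ => ?_
      rw [Fintype.sum_prod_type, Finset.sum_comm]
      refine Finset.sum_congr rfl fun v _ => ?_
      rw [← cov_W_sum p hp1]
      rfl
    have hsp := Finset.sum_filter_add_sum_filter_not Finset.univ
      (fun z : Fin n → Ω₀ × (∀ j, A j) × B => z ∈ wTypical p n δ) (fun z => ∏ i, p (z i))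
    have hCn := hC n hn
    calc _ = ∑ u : Fin n → Ω₀, ∑ v : Fin n → B,
        ∑ c : (∀ j, Fin (M n j) → Fin n → A j) with ¬ ∃ m : ∀ j, Fin (M n j),
          cvC u (fun j => c j (m j)) v ∈ wTypical p n δ, μ n (u, c, v) := by
          rw [Finset.sum_filter, Fintype.sum_prod_type]
          refine Finset.sum_congr rfl fun u _ => ?_
          rw [Fintype.sum_prod_type, Finset.sum_comm]
          refine Finset.sum_congr rfl fun v _ => ?_
          rw [Finset.sum_filter]
          rfl
      _ ≤ ∑ u : Fin n → Ω₀, ∑ v : Fin n → B,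
          (2 * cc n * (∏ i, pr0B p (u i) (v i)) + 2 * ((∏ i, pr0B p (u i) (v i)) -
          ∑ x : ∀ j, Fin n → A j with cvC u x v ∈ wTypical p n δ, ∏ i, p (cvC u x v i))) :=
          Finset.sum_le_sum fun u _ => Finset.sum_le_sum fun v _ => hfix u v
      _ = 2 * cc n * 1 + 2 * (1 -
          ∑ z : Fin n → Ω₀ × (∀ j, A j) × B with z ∈ wTypical p n δ, ∏ i, p (z i)) := by
          simp only [Finset.sum_add_distrib, ← Finset.mul_sum, Finset.sum_sub_distrib]
          rw [hWs, htyp]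
      _ ≤ _ := by linarith
  have hlim : Filter.Tendsto (fun n : ℕ => 1 - (2 * cc n + 2 * (C / n))) Filter.atTop (nhds 1) := by
    have h1 : Filter.Tendsto (fun n : ℕ => C / (n : ℝ)) Filter.atTop (nhds 0) :=
      tendsto_const_div_atTop_nhds_zero_nat C
    have := ((hcc0.const_mul 2).add (h1.const_mul 2)).const_sub 1
    simpa using this
  refine tendsto_of_tendsto_of_tendsto_of_le_of_le' hlim tendsto_const_nhds ?_ ?_
  · filter_upwards [Filter.eventually_gt_atTop 0] with n hn
    rw [hsplit n]
    have := hub n hn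
    linarith
  · refine Filter.Eventually.of_forall fun n => ?_
    rw [hsplit n]
    have : 0 ≤ ∑ ω ∈ Finset.univ.filter
          (fun ω : (Fin n → Ω₀) × (∀ j, Fin (M n j) → Fin n → A j) × (Fin n → B) =>
            ¬ ∃ m : ∀ j, Fin (M n j),
              (fun i => ((ω.1 i, fun j => ω.2.1 j (m j) i, ω.2.2 i) :
                Ω₀ × (∀ j, A j) × B)) ∈ wTypical p n δ), μ n ω :=
      Finset.sum_nonneg fun ω _ => hμ0 n ω
    linarith
end
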